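/- arXiv:0905.3594 — 4 statements merged into one kernel-verified Lean document; each statement's English description precedes it below -/
import Mathlib

section
/- Every nonnegative integer is a sum of three triangular numbers: for all n ≥ 0 there exist nonnegative integers a, b, c with n = T_a + T_b + T_c. -/
/-!
The identity `8 T_a + 1 = (2a+1)²` reduces the claim to showing that `m = 8n + 3` is a sum of
three squares: squares modulo 8 force all three to be odd.

For `m ≡ 3 (mod 8)` the argument is Dirichlet's. It combines two facts.

* A positive definite ternary quadratic form over `ℤ` with integral Gram matrix of determinant `1`
  is equivalent to `x² + y² + z²`, so it takes only sums of three squares as values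
  (`ternary_sum_three_squares`). This is Gauss's reduction: the leading coefficient and the leading
  `2 × 2` minor are decreased in turn until the leading coefficient is `1`, when completing the
  square leaves a binary form of determinant `1`, treated the same way.
* There is such a form that represents `m` (`exists_form_data`). Dirichlet's theorem on primes in
  arithmetic progressions gives `v` with `p = (8v+1)m/2 - 1/2` prime, `p ≡ 1 (mod 4)`; with
  `b = 8v + 1`, reciprocity shows that `-b` is a square `t²` modulo `2p = bm - 1`, and the form with
  Gram matrix `!![(b + t²)/2p, t, 1; t, 2p, 0; 1, 0, m]` has determinant `1`.
-/

/-- Division with remainder of least absolute value. -/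
lemma exists_centered_rem (A D : ℤ) (hA : 0 < A) : ∃ k r : ℤ, D = k * A + r ∧ 4 * r ^ 2 ≤ A ^ 2 := by
  refine ⟨(2 * D + A) / (2 * A), D - (2 * D + A) / (2 * A) * A, by ring, ?_⟩
  have h1 := Int.emod_nonneg (2 * D + A) (b := 2 * A) (by positivity)
  have h2 := Int.emod_lt_of_pos (2 * D + A) (b := 2 * A) (by positivity)
  have h3 := Int.emod_add_mul_ediv (2 * D + A) (2 * A)
  set k := (2 * D + A) / (2 * A)
  nlinarith

/-- A positive definite binary form of determinant `1` takes only sums of two squares as values. The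
bound `N` on the leading coefficient carries the induction. -/
lemma binary_sum_two_squares (N : ℕ) : ∀ A D C : ℤ, A ≤ N → 0 < A → A * C - D ^ 2 = 1 →
    ∀ y z : ℤ, ∃ p q : ℤ, A * y ^ 2 + 2 * D * y * z + C * z ^ 2 = p ^ 2 + q ^ 2 := by
  induction N with
  | zero => intro A D C h1 h2; simp at h1; omega
  | succ N ih =>
    intro A D C hN hA hdet y z
    rcases (show A = 1 ∨ 2 ≤ A by omega) with rfl | h2
    · exact ⟨y + D * z, z, by linear_combination z ^ 2 * hdet⟩
    · obtain ⟨k, r, rfl, hr⟩ := exists_centered_rem A D hA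
      -- the form after substituting `y - k z` for `y` has coefficients `A, r, C'`
      obtain ⟨C', hC'⟩ : ∃ C', C' = C - 2 * (k * A + r) * k + A * k ^ 2 := ⟨_, rfl⟩
      have hd : A * C' = 1 + r ^ 2 := by rw [hC']; linear_combination hdet
      have hpos : 0 < C' := by
        by_contra h
        nlinarith [sq_nonneg r]
      have hlt : C' < A := by
        by_contra h
        nlinarith
      obtain ⟨p, q, h⟩ := ih C' r A (by push_cast at hN; omega) hpos
        (by linear_combination hd) z (y + k * z)
      exact ⟨p, q, by rw [← h, hC']; ring⟩

/-- A positive definite ternary form of determinant `1`, with leading coefficient at most `N` and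
leading `2 × 2` minor at most `M`, takes only sums of three squares as values. The bounds carry a
lexicographic induction. -/
lemma ternary_sum_three_squares (N : ℕ) : ∀ M : ℕ, ∀ a b c d e f : ℤ, a ≤ N → a * b - f ^ 2 ≤ M →
    0 < a → 0 < a * b - f ^ 2 →
    a * b * c + 2 * d * e * f - a * d ^ 2 - b * e ^ 2 - c * f ^ 2 = 1 →
    ∀ x y z : ℤ, ∃ p q r : ℤ, a * x ^ 2 + b * y ^ 2 + c * z ^ 2 + 2 * d * y * z + 2 * e * x * z
      + 2 * f * x * y = p ^ 2 + q ^ 2 + r ^ 2 := by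
  induction N with
  | zero => intro M a b c d e f h1 _ h2; simp at h1; omega
  | succ N ihN =>
    intro M
    induction M with
    | zero => intro a b c d e f _ h1 _ h2; simp at h1; omega
    | succ M ihM =>
      intro a b c d e f hN hM ha hA hdet x y z
      obtain ⟨A, hAdef⟩ : ∃ A, A = a * b - f ^ 2 := ⟨_, rfl⟩
      rw [← hAdef] at hM hA
      rcases (show a = 1 ∨ 2 ≤ a by omega) with rfl | h2
      · obtain ⟨p, q, h⟩ := binary_sum_two_squares A.toNat A (d - e * f) (c - e ^ 2) (by simp) hA
          (by rw [hAdef]; linear_combination hdet) y z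
        exact ⟨x + f * y + e * z, p, q, by rw [hAdef] at h; linear_combination h⟩
      by_cases hbig : 4 * a < 3 * A ^ 2
      · -- the adjoint binary form `A, a d - e f, a c - e²` has determinant `a` and is not yet
        -- reduced, so a substitution in `y, z` decreases `A`
        obtain ⟨k, r, hD, hr⟩ := exists_centered_rem A (a * d - e * f) hA
        obtain ⟨c', hc'⟩ : ∃ c', c' = c - 2 * d * k + b * k ^ 2 := ⟨_, rfl⟩
        obtain ⟨d', hd'⟩ : ∃ d', d' = d - b * k := ⟨_, rfl⟩
        obtain ⟨e', he'⟩ : ∃ e', e' = e - f * k := ⟨_, rfl⟩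
        have hr' : r = a * d' - e' * f := by
          rw [hd', he']; linear_combination -hD - k * hAdef
        have hdet' : A * (a * c' - e' ^ 2) = a + r ^ 2 := by
          rw [hr', hAdef, hc', hd', he']; linear_combination a * hdet
        have hpos : 0 < a * c' - e' ^ 2 := by
          by_contra h
          nlinarith [sq_nonneg r]
        have hlt : a * c' - e' ^ 2 < A := by
          by_contra h
          nlinarith
        obtain ⟨p, q, s, h⟩ := ihM a c' b d' f e' hN (by push_cast at hM; omega) ha hpos
          (by rw [hc', hd', he']; linear_combination hdet) x z (y + k * z)
        exact ⟨p, q, s, by rw [← h, hc', hd', he']; ring⟩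
      · -- now `3 A² ≤ 4 a`, and a substitution in `x, y` decreases `a`
        obtain ⟨k, f', hf, hf'⟩ := exists_centered_rem a f ha
        obtain ⟨b', hb'⟩ : ∃ b', b' = b - 2 * f * k + a * k ^ 2 := ⟨_, rfl⟩
        obtain ⟨d', hd'⟩ : ∃ d', d' = d - e * k := ⟨_, rfl⟩
        have hAb : a * b' = A + f' ^ 2 := by
          rw [hAdef, hb', hf]; ring
        have hpos : 0 < b' := by
          by_contra h
          nlinarith [sq_nonneg f']
        have hlt : b' < a := by
          by_contra h
          have h3 : 3 * a ^ 2 ≤ 4 * A := by nlinarith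
          -- `27 a⁴ ≤ 48 A² ≤ 64 a` contradicts `a ≥ 2`
          have h4 : 9 * a ^ 4 ≤ 16 * A ^ 2 := by nlinarith
          have h5 : 27 * a ^ 3 * a ≤ 64 * a := by nlinarith
          have h6 : 27 * a ^ 3 ≤ 64 := le_of_mul_le_mul_right h5 ha
          nlinarith [sq_nonneg a]
        obtain ⟨p, q, s, h⟩ := ihN A.toNat b' a c e d' f' (by push_cast at hN; omega)
          (by rw [Int.toNat_of_nonneg hA.le]; linarith [hAb]) hpos (by linarith [hAb])
          (by
            have hf2 : f' = f - k * a := by linarith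
            rw [hb', hd', hf2]; linear_combination hdet) y (x + k * y) z
        have hf2 : f' = f - k * a := by linarith
        exact ⟨p, q, s, by rw [← h, hb', hd', hf2]; ring⟩

/-- The arithmetic input: for `m = 8n + 3` there is `b > 0` such that `-b` is a square modulo
`bm - 1 > 0`. -/
lemma exists_form_data (n : ℕ) : ∃ b t g : ℤ, 0 < b ∧ 0 < g ∧
    b + t ^ 2 = g * (b * (8 * n + 3) - 1) := by
  have hcop : (4 * n + 1).Coprime (4 * (8 * n + 3)) := by
    refine Nat.Coprime.mul_right ?_ ?_
    · rw [Nat.coprime_comm, show 4 * n + 1 = 1 + 4 * n by ring]; simp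
    · rw [show 8 * n + 3 = 1 + 2 * (4 * n + 1) by ring]; simp
  obtain ⟨p, hgt, hp, hmod⟩ :=
    Nat.forall_exists_prime_gt_and_modEq (4 * n + 1) (by omega) hcop
  obtain ⟨v, hv⟩ := (Nat.modEq_iff_dvd' hgt.le).1 hmod.symm
  have hpv : p = (4 * n + 1) + 4 * (8 * n + 3) * v := by omega
  have hp4 : p % 4 = 1 := by
    rw [hpv, show 4 * n + 1 + 4 * (8 * n + 3) * v = 1 + 4 * (n + (8 * n + 3) * v) by ring]; omega
  have := Fact.mk hp
  obtain ⟨b, hb⟩ : ∃ b : ℕ, b = 8 * v + 1 := ⟨_, rfl⟩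
  have hbo : Odd b := ⟨4 * v, by omega⟩
  have h2p : (2 * p : ℤ) = b * (8 * n + 3) - 1 := by
    rw [hpv, hb]; push_cast; ring
  have hJ : jacobiSym (-b) p = 1 := by
    have e1 : jacobiSym (-1) p = 1 := by
      rw [jacobiSym.at_neg_one (hp.odd_of_ne_two (by omega)), ZMod.χ₄_nat_one_mod_four hp4]
    have e2 : jacobiSym (-2) b = 1 := by
      rw [jacobiSym.at_neg_two hbo, ZMod.χ₈'_nat_eq_if_mod_eight,
        if_neg (by omega), if_pos (by omega)]
    -- `-2p = 1 - bm ≡ 1 (mod b)`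
    have e3 : jacobiSym (-2 * p) b = 1 := by
      rw [show (-2 * p : ℤ) = 1 + b * (-(8 * n + 3)) by linear_combination -h2p,
        jacobiSym.mod_left, Int.add_mul_emod_self_left, ← jacobiSym.mod_left, jacobiSym.one_left]
    rw [jacobiSym.mul_left, e2, one_mul] at e3
    rw [← neg_one_mul, jacobiSym.mul_left, e1, one_mul,
      ← jacobiSym.quadratic_reciprocity_one_mod_four hp4 hbo, e3]
  obtain ⟨s, hs⟩ := ZMod.isSquare_of_jacobiSym_eq_one hJ
  have hdvd : (p : ℤ) ∣ b + (s.val : ℤ) ^ 2 := by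
    rw [← ZMod.intCast_zmod_eq_zero_iff_dvd]
    push_cast at hs ⊢
    rw [ZMod.natCast_zmod_val]
    linear_combination -hs
  -- `s` or `s + p` is odd, so that `b + t²` is even as well
  obtain ⟨t, ht2, htp⟩ : ∃ t : ℤ, t % 2 = 1 ∧ (p : ℤ) ∣ b + t ^ 2 := by
    rcases Int.emod_two_eq_zero_or_one (s.val : ℤ) with h | h
    · refine ⟨s.val + p, by omega, ?_⟩
      rw [show (b + ((s.val : ℤ) + p) ^ 2) = b + (s.val : ℤ) ^ 2 + p * (2 * s.val + p) by ring]
      exact dvd_add hdvd (dvd_mul_right _ _)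
    · exact ⟨_, h, hdvd⟩
  obtain ⟨g, hg⟩ : (2 * p : ℤ) ∣ b + t ^ 2 := by
    refine IsCoprime.mul_dvd ?_ ?_ htp
    · exact Nat.isCoprime_iff_coprime.2
        ((Nat.coprime_primes Nat.prime_two hp).2 (by omega))
    · obtain ⟨u, rfl⟩ : ∃ u, t = 2 * u + 1 := ⟨t / 2, by omega⟩
      exact ⟨4 * v + 1 + 2 * u ^ 2 + 2 * u, by rw [hb]; push_cast; ring⟩
  have hb0 : (0 : ℤ) < b := by omega
  refine ⟨b, t, g, hb0, ?_, by rw [hg, ← h2p]; ring⟩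
  by_contra h
  have : (0 : ℤ) < p := by exact_mod_cast hp.pos
  nlinarith [sq_nonneg t]

theorem sum_three_triangular (n : ℕ) :
    ∃ a b c : ℕ, n = a * (a + 1) / 2 + b * (b + 1) / 2 + c * (c + 1) / 2 := by
  obtain ⟨b, t, g, hb, hg, h⟩ := exists_form_data n
  have hA : g * (b * (8 * n + 3) - 1) - t ^ 2 = b := by linear_combination -h
  obtain ⟨p, q, r, hs⟩ := ternary_sum_three_squares g.toNat b.toNat g (b * (8 * n + 3) - 1)
    (8 * n + 3) 0 1 t (by simp) (by rw [hA]; simp) hg (by rw [hA]; exact hb)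
    (by linear_combination (8 * n + 3 : ℤ) * hA) 0 0 1
  have hs' : 8 * n + 3 = p.natAbs ^ 2 + q.natAbs ^ 2 + r.natAbs ^ 2 := by
    zify
    simp only [sq_abs]
    linear_combination hs
  generalize p.natAbs = P at hs'
  generalize q.natAbs = Q at hs'
  generalize r.natAbs = R at hs'
  have sq_mod (x : ℕ) : (x % 2 = 1 ∧ x ^ 2 % 8 = 1) ∨ x ^ 2 % 8 = 0 ∨ x ^ 2 % 8 = 4 := by
    have : x % 8 < 8 := Nat.mod_lt _ (by norm_num)
    rw [Nat.pow_mod]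
    interval_cases h : x % 8 <;> norm_num <;> omega
  have hodd : P % 2 = 1 ∧ Q % 2 = 1 ∧ R % 2 = 1 := by
    have := sq_mod P
    have := sq_mod Q
    have := sq_mod R
    omega
  have tri (x : ℕ) (hx : x % 2 = 1) : x ^ 2 = 8 * (x / 2 * (x / 2 + 1) / 2) + 1 := by
    obtain ⟨u, hu⟩ : ∃ u, u = x / 2 := ⟨_, rfl⟩
    have h1 : x = 2 * u + 1 := by omega
    have h2 := Nat.div_mul_cancel (Nat.even_mul_succ_self u).two_dvd
    rw [← hu]
    calc x ^ 2 = 4 * (u * (u + 1)) + 1 := by rw [h1]; ring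
      _ = _ := by omega
  refine ⟨P / 2, Q / 2, R / 2, ?_⟩
  have := tri P hodd.1
  have := tri Q hodd.2.1
  have := tri R hodd.2.2
  omega
end

section
/- Let b₁ ≤ b₂ ≤ ⋯ ≤ b_k be positive integers. The polynomial b₁T_{x₁} + ⋯ + b_kT_{x_k} represents every nonnegative integer if and only if it represents 1, 2, 4, 5, and 8. -/
/-!
A sum representing `1`, `2`, `4`, `5`, `8` has its first coefficients forced ("escalation"). The
value `1` gives `b₁ = 1`; `T_x` misses `2`, so `b₂ ≤ 2`; `T_x + T_y` misses `5` and `T_x + 2T_y`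
misses `4`, so the first three coefficients are one of `(1,1,1)`, `(1,1,2)`, `(1,1,3)`, `(1,1,4)`,
`(1,1,5)`, `(1,2,2)`, `(1,2,3)`, `(1,2,4)`; and `T_x + T_y + 3T_z` misses `8`, so `(1,1,3)` is
followed by some `d` with `3 ≤ d ≤ 8`. It remains to see that the seven other ternary sums
(Liouville) and the six quaternary sums `(1,1,3,d)` represent every natural number.

As `8 T_x + 1 = (2x + 1)²`, these are statements about odd solutions of diagonal quadratic equations.
Elementary identities deduce all of them from representability by `x² + y² + z²`,
`x² + y² + 3z²`, `x² + 2(y² + yz + z²)` and `x² + y² + 5z²` in suitable residue classes: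
`three_squares`, `form_three`, `form_three_eisenstein` and `form_five`.

For these four the method is Dirichlet's. To represent `N` by a form of determinant `D`, Dirichlet's
theorem on primes supplies `b` with `bN - D` a prime or twice a prime, and quadratic reciprocity
makes `-b` a square modulo `bN - D`. This yields a positive definite ternary form of determinant `D`
with value `N` and principal minor `b` (`exists_reduced`). Hermite reduction (`exists_split`) shows
that for `D = 1, 3, 5` every such form is `X²` plus a reduced binary form; there are one, two and two
possibilities respectively, and the residue of `b` modulo `D` singles out the right one.
-/

def T (x : ℤ) : ℤ := x * (x + 1) / 2

/-! ### Reduction of binary and ternary forms -/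

/-- Adding a multiple of `A` to `B` gives a residue of absolute value at most `A / 2`. -/
lemma exists_shift (A B : ℤ) (hA : 0 < A) : ∃ k : ℤ, 2 * |B + A * k| ≤ A := by
  refine ⟨-((2 * B + A) / (2 * A)), ?_⟩
  have h1 := Int.emod_add_mul_ediv (2 * B + A) (2 * A)
  have h2 := Int.emod_nonneg (2 * B + A) (b := 2 * A) (by omega)
  have h3 := Int.emod_lt_of_pos (2 * B + A) (b := 2 * A) (by omega)
  set m := (2 * B + A) / (2 * A)
  have : 2 * |B + A * -m| = |2 * (B + A * -m)| := by rw [abs_mul]; norm_num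
  rw [this, abs_le]
  constructor <;> linarith

/-- Gauss reduction: the positive definite form `A X² + 2B XY + C Y²` is carried by a substitution
of determinant `1` to one with `2|B| ≤ A ≤ C`. The number `n` bounds `A` and drives the
induction. -/
lemma binary_reduce (n : ℕ) : ∀ A B C : ℤ, A.toNat ≤ n → 0 < A → 0 < A * C - B ^ 2 →
    ∃ p q r s : ℤ, p * s - q * r = 1 ∧
      0 < A * p ^ 2 + 2 * B * p * r + C * r ^ 2 ∧
      2 * |A * p * q + B * (p * s + q * r) + C * r * s| ≤ A * p ^ 2 + 2 * B * p * r + C * r ^ 2 ∧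
      A * p ^ 2 + 2 * B * p * r + C * r ^ 2 ≤ A * q ^ 2 + 2 * B * q * s + C * s ^ 2 := by
  induction n with
  | zero => intro A B C h1 h2; omega
  | succ n ih =>
    intro A B C hn hA hD
    obtain ⟨k, hk⟩ := exists_shift A B hA
    set B' := B + A * k with hB'
    set C' := A * k ^ 2 + 2 * B * k + C with hC'
    have hD' : A * C' - B' ^ 2 = A * C - B ^ 2 := by rw [hB', hC']; ring
    -- if the new last coefficient is below `A`, exchange the variables and descend
    by_cases h : A ≤ C'
    · refine ⟨1, k, 0, 1, by ring, by simpa using hA, ?_, ?_⟩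
      · have e : A * 1 * k + B * (1 * 1 + k * 0) + C * 0 * 1 = B' := by rw [hB']; ring
        rw [e]; linarith
      · linarith
    · have hC0 : 0 < C' := by
        by_contra hc
        nlinarith [sq_nonneg B']
      obtain ⟨p, q, r, s, h1, h2, h3, h4⟩ := ih C' (-B') A (by omega) hC0 (by nlinarith)
      have e1 : A * (k * p - r) ^ 2 + 2 * B * (k * p - r) * p + C * p ^ 2 =
          C' * p ^ 2 + 2 * -B' * p * r + A * r ^ 2 := by rw [hB', hC']; ring
      have e2 : A * (k * q - s) ^ 2 + 2 * B * (k * q - s) * q + C * q ^ 2 =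
          C' * q ^ 2 + 2 * -B' * q * s + A * s ^ 2 := by rw [hB', hC']; ring
      have e3 : A * (k * p - r) * (k * q - s) + B * ((k * p - r) * q + (k * q - s) * p)
          + C * p * q = C' * p * q + -B' * (p * s + q * r) + A * r * s := by
        rw [hB', hC']; ring
      refine ⟨k * p - r, k * q - s, p, q, by linarith, ?_, ?_, ?_⟩
      · rw [e1]; exact h2
      · rw [e1, e3]; exact h3
      · rw [e1, e2]; exact h4

/-- The ternary quadratic form with Gram matrix `[[a, t, s], [t, b, r], [s, r, c]]`, evaluated at
`(x, y, z)`. -/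
def Q (a b c r s t x y z : ℤ) : ℤ :=
  a * x ^ 2 + b * y ^ 2 + c * z ^ 2 + 2 * r * y * z + 2 * s * x * z + 2 * t * x * y

/-- The determinant of the Gram matrix of the form `Q a b c r s t`. -/
def Q.det (a b c r s t : ℤ) : ℤ :=
  a * b * c + 2 * r * s * t - a * r ^ 2 - b * s ^ 2 - c * t ^ 2

/-- Hermite's bound `27 a³ ≤ 64 D` for a reduced ternary form of determinant `D`. Here `a, b, t` are
the entries of the upper left block of its Gram matrix, and `(x, y, z)` is the reduced binary form
`a Q - (linear form)²` of determinant `a D`. For `D ≤ 5` the bound leaves `a ≤ 2`, and `a = 2` would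
force `x = 3` and `3z - y² = 2D` with `|y| ≤ 1`, which has no solution. -/
lemma leading_coeff_eq_one {D a b t x y z : ℤ} (hD : D = 1 ∨ D = 3 ∨ D = 5) (ha : 0 < a)
    (hab : a ≤ b) (ht : 2 * |t| ≤ a) (hx : a * b - t ^ 2 = x) (hx0 : 0 < x) (hy : 2 * |y| ≤ x)
    (hxz : x ≤ z) (hdet : x * z - y ^ 2 = a * D) : a = 1 := by
  have ht' := abs_le.mp (show |2 * t| ≤ a by rw [abs_mul]; simpa using ht)
  have hy' := abs_le.mp (show |2 * y| ≤ x by rw [abs_mul]; simpa using hy)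
  have ht2 : 4 * t ^ 2 ≤ a ^ 2 := by nlinarith
  have hy2 : 4 * y ^ 2 ≤ x ^ 2 := by nlinarith
  have hx1 : 3 * a ^ 2 ≤ 4 * x := by nlinarith
  have hx2 : 3 * x ^ 2 ≤ 4 * (a * D) := by nlinarith
  have hD5 : a * D ≤ a * 5 := mul_le_mul_of_nonneg_left (by omega) ha.le
  have ha3 : a < 3 := by
    by_contra hc
    push Not at hc
    have h1 : (3 * a ^ 2) ^ 2 ≤ (4 * x) ^ 2 := pow_le_pow_left₀ (by positivity) hx1 2
    have h2 : 27 * a ^ 3 ≤ 320 := by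
      by_contra h
      push Not at h
      have : 320 * a < 27 * a ^ 3 * a := mul_lt_mul_of_pos_right h ha
      linarith [show 27 * a ^ 3 * a = 3 * (3 * a ^ 2) ^ 2 by ring,
        show (4 * x) ^ 2 = 16 * x ^ 2 by ring]
    linarith [pow_le_pow_left₀ (by norm_num) hc 3]
  obtain rfl | rfl : a = 1 ∨ a = 2 := by omega
  · rfl
  · exfalso
    have hx3 : x ≤ 3 := by nlinarith
    obtain rfl : x = 3 := by omega
    have : y = -1 ∨ y = 0 ∨ y = 1 := by omega
    rcases this with rfl | rfl | rfl <;> omega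

/-- A positive definite integral ternary form of determinant `1`, `3` or `5` is an integral
substitution of `X² + (A Y² + 2B YZ + C Z²)` with a reduced binary part. The substitution found is
invertible, but only its existence is needed: it transports the represented values, and the minors
of the Gram matrix, to the split form. -/
lemma exists_split (D : ℤ) (hD0 : 0 < D) (hD : D = 1 ∨ D = 3 ∨ D = 5) (n : ℕ) :
    ∀ a b c r s t : ℤ, a.toNat ≤ n → 0 < a → 0 < a * b - t ^ 2 → Q.det a b c r s t = D →
    ∃ A B C : ℤ, 0 < A ∧ 2 * |B| ≤ A ∧ A ≤ C ∧ A * C - B ^ 2 = D ∧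
      ∃ f : (Fin 3 → ℤ) →ₗ[ℤ] (Fin 3 → ℤ), ∀ v : Fin 3 → ℤ,
        Q a b c r s t (v 0) (v 1) (v 2) = Q 1 A C B 0 0 (f v 0) (f v 1) (f v 2) := by
  induction n with
  | zero => intro a b c r s t h1 h2; omega
  | succ n ih =>
    intro a b c r s t hn ha hm hdet
    -- reduce the binary form `a Q - (a x + t y + s z) ^ 2`
    obtain ⟨p, q, u, w, h1, h2, h3, h4⟩ := binary_reduce _ (a * b - t ^ 2) (a * r - s * t)
      (a * c - s ^ 2) le_rfl hm (by
        have : (a * b - t ^ 2) * (a * c - s ^ 2) - (a * r - s * t) ^ 2 = a * D := by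
          rw [← hdet, Q.det]; ring
        rw [this]; positivity)
    -- then translate the first variable so that `t` and `s` become at most `a / 2`
    obtain ⟨k, hk⟩ := exists_shift a (t * p + s * u) ha
    obtain ⟨l, hl⟩ := exists_shift a (s * w + t * q) ha
    set t' := t * p + s * u + a * k with ht'
    set s' := s * w + t * q + a * l with hs'
    set b' := b * p ^ 2 + 2 * r * p * u + c * u ^ 2 + 2 * (t * p + s * u) * k + a * k ^ 2 with hb'
    set c' := b * q ^ 2 + 2 * r * q * w + c * w ^ 2 + 2 * (s * w + t * q) * l + a * l ^ 2 with hc'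
    set r' := b * p * q + r * (p * w + q * u) + c * u * w + k * (s * w + t * q)
      + l * (t * p + s * u) + a * k * l with hr'
    -- `g` passes from the old variables to the new ones
    let g : (Fin 3 → ℤ) →ₗ[ℤ] (Fin 3 → ℤ) := Matrix.mulVecLin
      !![1, -k * w + l * u, k * q - l * p; 0, w, -q; 0, -u, p]
    have hg0 (v : Fin 3 → ℤ) : g v 0 = v 0 - k * (w * v 1 - q * v 2) - l * (p * v 2 - u * v 1) := by
      simp [g, Matrix.mulVec, dotProduct, Fin.sum_univ_three]; ring
    have hg1 (v : Fin 3 → ℤ) : g v 1 = w * v 1 - q * v 2 := by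
      simp [g, Matrix.mulVec, dotProduct, Fin.sum_univ_three]; ring
    have hg2 (v : Fin 3 → ℤ) : g v 2 = p * v 2 - u * v 1 := by
      simp [g, Matrix.mulVec, dotProduct, Fin.sum_univ_three]; ring
    have hQ (v : Fin 3 → ℤ) :
        Q a b c r s t (v 0) (v 1) (v 2) = Q a b' c' r' s' t' (g v 0) (g v 1) (g v 2) := by
      have e1 : v 1 = p * g v 1 + q * g v 2 := by
        rw [hg1, hg2]; linear_combination (-v 1) * h1
      have e2 : v 2 = u * g v 1 + w * g v 2 := by
        rw [hg1, hg2]; linear_combination (-v 2) * h1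
      have e0 : v 0 = g v 0 + k * g v 1 + l * g v 2 := by
        rw [hg0, hg1, hg2]; ring
      rw [e0, e1, e2]
      simp only [Q, ht', hs', hb', hc', hr']
      ring
    have hdet' : Q.det a b' c' r' s' t' = D := by
      rw [← hdet]
      have : Q.det a b' c' r' s' t' = (p * w - q * u) ^ 2 * Q.det a b c r s t := by
        simp only [Q.det, ht', hs', hb', hc', hr']; ring
      rw [this, h1]; ring
    have g11 : (a * b - t ^ 2) * p ^ 2 + 2 * (a * r - s * t) * p * u + (a * c - s ^ 2) * u ^ 2
        = a * b' - t' ^ 2 := by simp only [ht', hb']; ring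
    have g12 : (a * b - t ^ 2) * p * q + (a * r - s * t) * (p * w + q * u)
        + (a * c - s ^ 2) * u * w = a * r' - s' * t' := by simp only [ht', hs', hr']; ring
    have g22 : (a * b - t ^ 2) * q ^ 2 + 2 * (a * r - s * t) * q * w + (a * c - s ^ 2) * w ^ 2
        = a * c' - s' ^ 2 := by simp only [hs', hc']; ring
    rw [g11] at h2 h3 h4
    rw [g12] at h3
    rw [g22] at h4
    have hG : (a * b' - t' ^ 2) * (a * c' - s' ^ 2) - (a * r' - s' * t') ^ 2 = a * D := by
      rw [← hdet', Q.det]; ring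
    clear_value t' s' b' c' r' g
    by_cases hba : b' < a
    · -- a smaller leading coefficient: exchange the first two variables
      have hb0 : 0 < b' := by
        by_contra hc
        nlinarith [sq_nonneg t']
      obtain ⟨A, B, C, hA, hB, hC, hABC, f, hf⟩ := ih b' a c' s' r' t' (by omega) hb0
        (by linarith) (by rw [← hdet']; simp only [Q.det]; ring)
      let e : (Fin 3 → ℤ) →ₗ[ℤ] (Fin 3 → ℤ) := Matrix.mulVecLin !![0, 1, 0; 1, 0, 0; 0, 0, 1]
      refine ⟨A, B, C, hA, hB, hC, hABC, f ∘ₗ e ∘ₗ g, fun v => ?_⟩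
      have := hf (e (g v))
      rw [hQ, LinearMap.comp_apply, LinearMap.comp_apply, ← this]
      simp [e, Matrix.mulVec, dotProduct, Fin.sum_univ_three, Q]
      ring
    · push Not at hba
      generalize hx : a * b' - t' ^ 2 = x at *
      generalize hy : a * r' - s' * t' = y at *
      generalize hz : a * c' - s' ^ 2 = z at *
      obtain rfl := leading_coeff_eq_one hD ha hba hk hx h2 h3 h4 hG
      obtain rfl : t' = 0 := by
        have := abs_le.mp (show |2 * t'| ≤ 1 by rw [abs_mul]; simpa using hk)
        omega
      obtain rfl : s' = 0 := by
        have := abs_le.mp (show |2 * s'| ≤ 1 by rw [abs_mul]; simpa using hl)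
        omega
      refine ⟨x, y, z, h2, h3, h4, by linarith, g, fun v => ?_⟩
      rw [hQ, ← hx, ← hy, ← hz]
      simp only [Q]; ring

/-! ### Jacobi symbols and primes in progressions -/

section Residues

open NumberTheorySymbols

lemma jacobi_one {b p D N : ℕ} (hb : b % 8 = 1) (hp : p % 4 = 1) (hD : Odd D)
    (hbD : b ≡ 1 [MOD D]) (h : 2 * p + D = b * N) : J(-(b : ℤ) | p) = 1 := by
  have hbo : Odd b := Nat.odd_iff.mpr (by omega)
  have hpo : Odd p := Nat.odd_iff.mpr (by omega)
  have h2 : J(2 | b) = 1 := by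
    rw [jacobiSym.at_two hbo, ZMod.χ₈_nat_eq_if_mod_eight]; simp [hb]; omega
  have hDb : J(-(D : ℤ) | b) = 1 := by
    rw [jacobiSym.neg _ hbo, ZMod.χ₄_nat_one_mod_four (by omega), one_mul,
      jacobiSym.quadratic_reciprocity_one_mod_four' hD (by omega),
      jacobiSym.mod_left' (a₂ := 1) (by exact_mod_cast hbD), jacobiSym.one_left]
  have h3 : J(((2 * p : ℕ) : ℤ) | b) = J(-(D : ℤ) | b) := by
    apply jacobiSym.mod_left'
    apply Int.ModEq.symm
    rw [Int.modEq_iff_dvd]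
    exact ⟨N, by push_cast; zify at h; linarith⟩
  rw [jacobiSym.neg _ hpo, ZMod.χ₄_nat_one_mod_four hp, one_mul,
    jacobiSym.quadratic_reciprocity_one_mod_four' hbo hp]
  -- what is left is `J(p | b) = J(2p | b) = J(-D | b) = 1`
  rw [hDb] at h3
  push_cast at h3
  rwa [jacobiSym.mul_left, h2, one_mul] at h3

/-- As `b ≡ 3 mod 4`, reciprocity gives `J(-b | p) = J(p | b)` whatever `p` is modulo `4`. -/
lemma jacobi_three {b p D N : ℕ} (hb : b % 8 = 3) (hp : Odd p)
    (hbD : J(-(D : ℤ) | b) = -1) (h : 2 * p + D = b * N) : J(-(b : ℤ) | p) = 1 := by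
  have hbo : Odd b := Nat.odd_iff.mpr (by omega)
  have h2 : J(2 | b) = -1 := by
    rw [jacobiSym.at_two hbo, ZMod.χ₈_nat_eq_if_mod_eight]; simp [hb]; omega
  have h3 : J(((2 * p : ℕ) : ℤ) | b) = J(-(D : ℤ) | b) := by
    apply jacobiSym.mod_left'
    apply Int.ModEq.symm
    rw [Int.modEq_iff_dvd]
    exact ⟨N, by push_cast; zify at h; linarith⟩
  rw [hbD] at h3
  push_cast at h3
  rw [jacobiSym.mul_left, h2] at h3
  have hpb : J(p | b) = 1 := by linarith
  rw [jacobiSym.neg _ hp]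
  rcases Nat.odd_mod_four_iff.mp (Nat.odd_iff.mp hp) with h4 | h4
  · rw [ZMod.χ₄_nat_one_mod_four h4, jacobiSym.quadratic_reciprocity_one_mod_four' hbo h4, hpb]
    rfl
  · rw [ZMod.χ₄_nat_three_mod_four h4,
      jacobiSym.quadratic_reciprocity_three_mod_four (by omega) h4, hpb]
    rfl

lemma exists_sq_of_jacobi {b p : ℕ} (hp : p.Prime) (h : J(-(b : ℤ) | p) = 1) :
    ∃ j : ℤ, (p : ℤ) ∣ b + j ^ 2 := by
  have := Fact.mk hp
  obtain ⟨y, hy⟩ := ZMod.isSquare_of_jacobiSym_eq_one h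
  obtain ⟨j, rfl⟩ := ZMod.intCast_surjective y
  refine ⟨j, (ZMod.intCast_zmod_eq_zero_iff_dvd _ _).mp ?_⟩
  push_cast at hy ⊢
  linear_combination -hy

lemma exists_sq_two_mul {b p : ℕ} (hp : p.Prime) (hpo : Odd p) (h : J(-(b : ℤ) | p) = 1) :
    ∃ j : ℤ, ((2 * p : ℕ) : ℤ) ∣ b + j ^ 2 := by
  obtain ⟨j, hj⟩ := exists_sq_of_jacobi hp h
  have key : ∀ i : ℤ, (p : ℤ) ∣ b + i ^ 2 → Even ((b : ℤ) + i ^ 2) →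
      ((2 * p : ℕ) : ℤ) ∣ b + i ^ 2 := by
    intro i h1 h2
    push_cast
    refine IsCoprime.mul_dvd ?_ h2.two_dvd h1
    exact_mod_cast (Nat.coprime_two_left.mpr hpo)
  by_cases he : Even ((b : ℤ) + j ^ 2)
  · exact ⟨j, key j hj he⟩
  · refine ⟨j + p, key _ ?_ ?_⟩
    · obtain ⟨c, hc⟩ := hj
      exact ⟨c + 2 * j + p, by linear_combination hc⟩
    · have : Odd (p : ℤ) := by exact_mod_cast hpo
      grind [Int.even_add, Int.even_pow]

/-- Dirichlet's theorem in the shape needed here: some `b ≡ r mod 2M` makes `(bN - D) / 2` an odd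
prime. The number `a` is the value of `(bN - D) / 2` at `b = r`. -/
lemma exists_prime_two_mul {N D r M a : ℕ} (hN : N ≠ 0) (hM : M ≠ 0) (h : 2 * a + D = r * N)
    (haM : a.Coprime M) (hND : N.Coprime D) :
    ∃ p t : ℕ, p.Prime ∧ Odd p ∧ 2 * p + D = (r + 2 * M * t) * N ∧ p = a + M * N * t := by
  have haN : a.Coprime N := by
    have h1 : a.gcd N ∣ D := (Nat.dvd_add_right ((Nat.gcd_dvd_left a N).mul_left 2)).mp
      (h ▸ (Nat.gcd_dvd_right a N).mul_left r)
    exact Nat.dvd_one.mp (hND ▸ Nat.dvd_gcd (Nat.gcd_dvd_right a N) h1)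
  -- `p > a + 2` makes `p` odd and keeps the multiple `t` a natural number
  obtain ⟨p, hpa, hp, hmod⟩ := Nat.forall_exists_prime_gt_and_modEq (a + 2)
    (Nat.mul_ne_zero hM hN) (haM.mul_right haN)
  obtain ⟨t, ht⟩ := (Nat.modEq_iff_dvd' (by omega)).mp hmod.symm
  have hpe : p = a + M * N * t := by omega
  refine ⟨p, t, hp, hp.odd_of_ne_two (by omega), ?_, hpe⟩
  rw [hpe]; linear_combination h

/-! ### Numbers represented by four ternary forms -/

/-- If `-b` is a square modulo `m = bN - D`, say `b + j² = m e`, then the form with Gram matrix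
`[[e, j, 1], [j, m, 0], [1, 0, N]]` is positive definite of determinant `D`, has the value `N` and
the upper left minor `b`. Splitting it as `X² + (A Y² + 2B YZ + C Z²)` shows that `N` is a value of
the split form, and that `b`, being a minor, is a value of its adjoint form. The value `b` is what
identifies the class of the form. -/
lemma exists_reduced {D N b m j : ℤ} (hD : D = 1 ∨ D = 3 ∨ D = 5) (hb : 0 < b) (hm : 0 < m)
    (hmN : m + D = b * N) (hj : m ∣ b + j ^ 2) :
    ∃ A B C : ℤ, 0 < A ∧ 2 * |B| ≤ A ∧ A ≤ C ∧ A * C - B ^ 2 = D ∧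
      (∃ x y z : ℤ, N = x ^ 2 + A * y ^ 2 + 2 * B * y * z + C * z ^ 2) ∧
      ∃ x y z : ℤ, b = D * x ^ 2 + A * y ^ 2 + 2 * B * y * z + C * z ^ 2 := by
  obtain ⟨e, he⟩ := hj
  have he0 : 0 < e := by
    by_contra h
    nlinarith [sq_nonneg j]
  obtain ⟨A, B, C, hA, hB, hC, hABC, f, hf⟩ := exists_split D (by omega) hD _ e m N 0 1 j le_rfl
    he0 (by linarith) (by rw [Q.det]; linear_combination (-N) * he - hmN)
  refine ⟨A, B, C, hA, hB, hC, hABC, ?_, ?_⟩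
  · have := hf ![0, 0, 1]
    simp only [Q] at this
    simp at this
    exact ⟨f ![0, 0, 1] 0, f ![0, 0, 1] 1, f ![0, 0, 1] 2, by rw [this]; ring⟩
  · have h1 := hf ![1, 0, 0]
    have h2 := hf ![0, 1, 0]
    have h3 := hf (![1, 0, 0] + ![0, 1, 0])
    rw [map_add] at h3
    generalize f ![1, 0, 0] = u at *
    generalize f ![0, 1, 0] = v at *
    simp only [Q] at h1 h2 h3
    simp at h1 h2 h3
    -- polarization recovers the inner product `j` of the images of the first two basis vectors
    have hj2 : j = u 0 * v 0 + A * (u 1 * v 1) + B * (u 1 * v 2 + u 2 * v 1) + C * (u 2 * v 2) := by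
      linarith
    -- the Gram determinant of `u, v` is the adjoint form at the cross product of `u` and `v`
    refine ⟨u 1 * v 2 - u 2 * v 1, u 0 * v 1 - u 1 * v 0, u 0 * v 2 - u 2 * v 0, ?_⟩
    have : b = e * m - j ^ 2 := by linarith
    rw [this, h1, h2, hj2, ← hABC]; ring

lemma three_squares_aux {N b m j : ℤ} (hb : 0 < b) (hm : 0 < m)
    (hmN : m + 1 = b * N) (hj : m ∣ b + j ^ 2) : ∃ x y z : ℤ, N = x ^ 2 + y ^ 2 + z ^ 2 := by
  obtain ⟨A, B, C, hA, hB, hC, hABC, ⟨x, y, z, h⟩, -⟩ := exists_reduced (by simp) hb hm hmN hj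
  obtain ⟨hB1, hB2⟩ := abs_le.mp (show |2 * B| ≤ A by rw [abs_mul]; simpa using hB)
  have : A < 2 := by nlinarith
  obtain rfl : A = 1 := by omega
  obtain rfl : B = 0 := by omega
  obtain rfl : C = 1 := by omega
  exact ⟨x, y, z, by linarith⟩

/-- There are two classes of determinant `3`. The adjoint of `x² + y² + 3z²` is a square modulo `3`,
that of `x² + 2(y² + yz + z²)` is twice a square modulo `3`, so `b` modulo `3` decides between
them. -/
lemma form_three_aux {N b m j : ℤ} (hb : 0 < b) (hm : 0 < m)
    (hmN : m + 3 = b * N) (hj : m ∣ b + j ^ 2) :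
    (b % 3 = 1 → ∃ x y z : ℤ, N = x ^ 2 + y ^ 2 + 3 * z ^ 2) ∧
    (b % 3 = 2 → ∃ x y z : ℤ, N = x ^ 2 + 2 * (y ^ 2 + y * z + z ^ 2)) := by
  obtain ⟨A, B, C, hA, hB, hC, hABC, ⟨x, y, z, h⟩, x', y', z', h'⟩ :=
    exists_reduced (by simp) hb hm hmN hj
  obtain ⟨hB1, hB2⟩ := abs_le.mp (show |2 * B| ≤ A by rw [abs_mul]; simpa using hB)
  have : A < 3 := by nlinarith
  obtain rfl | rfl : A = 1 ∨ A = 2 := by omega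
  · obtain rfl : B = 0 := by omega
    obtain rfl : C = 3 := by omega
    refine ⟨fun _ => ⟨x, y, z, by linarith⟩, fun hb3 => ?_⟩
    have h5 : b = y' ^ 2 + 3 * (x' ^ 2 + z' ^ 2) := by linarith
    have h6 : y' ^ 2 % 3 = 2 := by omega
    rcases (by omega : y' % 3 = 0 ∨ y' % 3 = 1 ∨ y' % 3 = 2) with h7 | h7 | h7 <;>
      simp [pow_two, Int.mul_emod, h7] at h6
  · obtain rfl | rfl | rfl : B = -1 ∨ B = 0 ∨ B = 1 := by omega
    · obtain rfl : C = 2 := by omega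
      refine ⟨fun hb3 => ?_, fun _ => ⟨x, y, -z, by linarith⟩⟩
      have h5 : b = 2 * (y' + z') ^ 2 + 3 * (x' ^ 2 - 2 * y' * z') := by linarith
      have h6 : (y' + z') ^ 2 % 3 = 2 := by omega
      rcases (by omega : (y' + z') % 3 = 0 ∨ (y' + z') % 3 = 1 ∨ (y' + z') % 3 = 2)
        with h7 | h7 | h7 <;> simp [pow_two, Int.mul_emod, h7] at h6
    · omega
    · obtain rfl : C = 2 := by omega
      refine ⟨fun hb3 => ?_, fun _ => ⟨x, y, z, by linarith⟩⟩
      have h5 : b = 2 * (y' - z') ^ 2 + 3 * (x' ^ 2 + 2 * y' * z') := by linarith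
      have h6 : (y' - z') ^ 2 % 3 = 2 := by omega
      rcases (by omega : (y' - z') % 3 = 0 ∨ (y' - z') % 3 = 1 ∨ (y' - z') % 3 = 2)
        with h7 | h7 | h7 <;> simp [pow_two, Int.mul_emod, h7] at h6

/-- The other class of determinant `5`, `x² + 2y² + 2yz + 3z²`, is excluded because its adjoint form
is twice a square modulo `5`, which cannot be `1`. -/
lemma form_five_aux {N b m j : ℤ} (hb : 0 < b) (hm : 0 < m)
    (hmN : m + 5 = b * N) (hj : m ∣ b + j ^ 2) (hb5 : b % 5 = 1) :
    ∃ x y z : ℤ, N = x ^ 2 + y ^ 2 + 5 * z ^ 2 := by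
  obtain ⟨A, B, C, hA, hB, hC, hABC, ⟨x, y, z, h⟩, x', y', z', h'⟩ :=
    exists_reduced (by simp) hb hm hmN hj
  obtain ⟨hB1, hB2⟩ := abs_le.mp (show |2 * B| ≤ A by rw [abs_mul]; simpa using hB)
  have : A < 3 := by nlinarith
  obtain rfl | rfl : A = 1 ∨ A = 2 := by omega
  · obtain rfl : B = 0 := by omega
    obtain rfl : C = 5 := by omega
    exact ⟨x, y, z, by linarith⟩
  · exfalso
    obtain ⟨w, k, hw⟩ : ∃ w k : ℤ, b = 2 * w ^ 2 + 5 * k := by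
      obtain rfl | rfl | rfl : B = -1 ∨ B = 0 ∨ B = 1 := by omega
      · obtain rfl : C = 3 := by omega
        exact ⟨y' + 2 * z', x' ^ 2 - 2 * y' * z' - z' ^ 2, by linarith⟩
      · omega
      · obtain rfl : C = 3 := by omega
        exact ⟨y' - 2 * z', x' ^ 2 + 2 * y' * z' - z' ^ 2, by linarith⟩
    have h6 : w ^ 2 % 5 = 3 := by omega
    rcases (by omega : w % 5 = 0 ∨ w % 5 = 1 ∨ w % 5 = 2 ∨ w % 5 = 3 ∨ w % 5 = 4)
      with h7 | h7 | h7 | h7 | h7 <;> simp [pow_two, Int.mul_emod, h7] at h6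

/-- Part of the three squares theorem of Legendre and Gauss. The auxiliary number `b` is taken
`3 mod 8`, `1 mod 4` or `1 mod 8` in the three cases, and `bN - 1` is twice a prime, a prime, or
twice a prime. -/
theorem three_squares {N : ℕ} (hN : N % 4 = 1 ∨ N % 4 = 2 ∨ N % 8 = 3) :
    ∃ x y z : ℤ, (N : ℤ) = x ^ 2 + y ^ 2 + z ^ 2 := by
  rcases hN with hN | hN | hN
  · obtain ⟨p, t, hp, hpo, h, -⟩ := exists_prime_two_mul (N := N) (D := 1) (r := 3) (M := 4)
      (a := (3 * N - 1) / 2) (by omega) (by omega) (by omega)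
      (Nat.Coprime.pow_right 2 (Nat.coprime_two_right.mpr (Nat.odd_iff.mpr (by omega))))
      (by simp)
    have hb : (3 + 2 * 4 * t) % 8 = 3 := by omega
    obtain ⟨j, hj⟩ := exists_sq_two_mul hp hpo (jacobi_three hb hpo (by
      rw [Nat.cast_one, jacobiSym.at_neg_one (Nat.odd_iff.mpr (by omega)),
        ZMod.χ₄_nat_three_mod_four (by omega)]) h)
    exact three_squares_aux (by positivity) (by exact_mod_cast (by have := hp.pos; omega))
      (by exact_mod_cast h) hj
  · obtain ⟨p, hpa, hp, hmod⟩ := Nat.forall_exists_prime_gt_and_modEq N (q := 4 * N) (a := N - 1)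
      (by omega) (by
        refine Nat.Coprime.mul_right (Nat.Coprime.pow_right 2
          (Nat.coprime_two_right.mpr (Nat.odd_iff.mpr (by omega)))) ?_
        exact (Nat.coprime_self_sub_left (by omega)).mpr (by simp))
    obtain ⟨t, ht⟩ := (Nat.modEq_iff_dvd' (by omega)).mp hmod.symm
    have hpN : p + 1 = (1 + 4 * t) * N := by
      have : p + 1 = 4 * N * t + N := by omega
      rw [this]; ring
    have hp4 : p % 4 = 1 := by
      have : p + 1 = 4 * (N * t) + N := by rw [hpN]; ring
      omega
    have hbo : Odd (1 + 4 * t) := Nat.odd_iff.mpr (by omega)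
    obtain ⟨j, hj⟩ := exists_sq_of_jacobi (b := 1 + 4 * t) hp (by
      rw [jacobiSym.neg _ (Nat.odd_iff.mpr (by omega)), ZMod.χ₄_nat_one_mod_four hp4, one_mul,
        jacobiSym.quadratic_reciprocity_one_mod_four' hbo hp4,
        jacobiSym.mod_left' (a₂ := -1), jacobiSym.at_neg_one hbo,
        ZMod.χ₄_nat_one_mod_four (by omega)]
      apply Int.ModEq.symm
      rw [Int.modEq_iff_dvd]
      exact ⟨N, by zify at hpN; push_cast; linarith⟩)
    exact three_squares_aux (by positivity) (by exact_mod_cast hp.pos)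
      (by exact_mod_cast hpN) hj
  · obtain ⟨p, t, hp, hpo, h, hpe⟩ := exists_prime_two_mul (N := N) (D := 1) (r := 1) (M := 4)
      (a := (N - 1) / 2) (by omega) (by omega) (by omega)
      (Nat.Coprime.pow_right 2 (Nat.coprime_two_right.mpr (Nat.odd_iff.mpr (by omega))))
      (by simp)
    have hp4 : p % 4 = 1 := by rw [mul_assoc] at hpe; omega
    obtain ⟨j, hj⟩ := exists_sq_two_mul hp hpo (jacobi_one (b := 1 + 2 * 4 * t) (by omega) hp4
      odd_one (Nat.modEq_one) h)
    exact three_squares_aux (by positivity) (by exact_mod_cast (by have := hp.pos; omega))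
      (by exact_mod_cast h) hj

/-- Here `b ≡ 1 mod 24` and `bN - 3` is twice a prime `p ≡ 1 mod 4`. -/
theorem form_three {N : ℕ} (hN : N % 8 = 5) (hN3 : N % 3 ≠ 0) :
    ∃ x y z : ℤ, (N : ℤ) = x ^ 2 + y ^ 2 + 3 * z ^ 2 := by
  obtain ⟨p, t, hp, hpo, h, hpe⟩ := exists_prime_two_mul (N := N) (D := 3) (r := 1) (M := 12)
    (a := (N - 3) / 2) (by omega) (by omega) (by omega)
    (Nat.Coprime.mul_right (m := 4) (n := 3) (Nat.Coprime.pow_right 2 (Nat.coprime_two_right.mpr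
      (Nat.odd_iff.mpr (by omega)))) ((Nat.Prime.coprime_iff_not_dvd Nat.prime_three).mpr
        (by omega)).symm)
    ((Nat.Prime.coprime_iff_not_dvd Nat.prime_three).mpr (by omega)).symm
  have hp4 : p % 4 = 1 := by
    have : p = (N - 3) / 2 + 4 * (3 * N * t) := by rw [hpe]; ring
    omega
  obtain ⟨j, hj⟩ := exists_sq_two_mul hp hpo (jacobi_one (b := 1 + 2 * 12 * t) (by omega) hp4
    (by decide) (by rw [Nat.ModEq]; omega) h)
  exact (form_three_aux (by positivity) (by exact_mod_cast (by have := hp.pos; omega))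
    (by exact_mod_cast h) hj).1 (by push_cast; omega)

/-- Here `b ≡ 11 mod 24` and `bN - 3` is twice a prime. -/
theorem form_three_eisenstein {N : ℕ} (hN : N % 4 = 3) (hN3 : N % 3 ≠ 0) :
    ∃ x y z : ℤ, (N : ℤ) = x ^ 2 + 2 * (y ^ 2 + y * z + z ^ 2) := by
  obtain ⟨p, t, hp, hpo, h, hpe⟩ := exists_prime_two_mul (N := N) (D := 3) (r := 11) (M := 12)
    (a := (11 * N - 3) / 2) (by omega) (by omega) (by omega)
    (Nat.Coprime.mul_right (m := 4) (n := 3) (Nat.Coprime.pow_right 2 (Nat.coprime_two_right.mpr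
      (Nat.odd_iff.mpr (by omega)))) ((Nat.Prime.coprime_iff_not_dvd Nat.prime_three).mpr
        (by omega)).symm)
    ((Nat.Prime.coprime_iff_not_dvd Nat.prime_three).mpr (by omega)).symm
  obtain ⟨j, hj⟩ := exists_sq_two_mul hp hpo (jacobi_three (b := 11 + 2 * 12 * t) (by omega) hpo
    (by
      rw [jacobiSym.neg _ (Nat.odd_iff.mpr (by omega)), ZMod.χ₄_nat_three_mod_four (by omega),
        jacobiSym.quadratic_reciprocity_three_mod_four (by rfl) (by omega),
        jacobiSym.mod_left' (a₂ := 2) (by push_cast; omega)]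
      norm_num) h)
  exact (form_three_aux (by positivity) (by exact_mod_cast (by have := hp.pos; omega))
    (by exact_mod_cast h) hj).2 (by push_cast; omega)

/-- Here `b ≡ 1 mod 40` and `bN - 5` is twice a prime `p ≡ 1 mod 4`. -/
theorem form_five {N : ℕ} (hN : N % 8 = 7) (hN5 : N % 5 ≠ 0) :
    ∃ x y z : ℤ, (N : ℤ) = x ^ 2 + y ^ 2 + 5 * z ^ 2 := by
  obtain ⟨p, t, hp, hpo, h, hpe⟩ := exists_prime_two_mul (N := N) (D := 5) (r := 1) (M := 20)
    (a := (N - 5) / 2) (by omega) (by omega) (by omega)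
    (Nat.Coprime.mul_right (m := 4) (n := 5) (Nat.Coprime.pow_right 2 (Nat.coprime_two_right.mpr
      (Nat.odd_iff.mpr (by omega)))) ((Nat.Prime.coprime_iff_not_dvd Nat.prime_five).mpr
        (by omega)).symm)
    ((Nat.Prime.coprime_iff_not_dvd Nat.prime_five).mpr (by omega)).symm
  have hp4 : p % 4 = 1 := by
    have : p = (N - 5) / 2 + 4 * (5 * N * t) := by rw [hpe]; ring
    omega
  obtain ⟨j, hj⟩ := exists_sq_two_mul hp hpo (jacobi_one (b := 1 + 2 * 20 * t) (by omega) hp4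
    (by decide) (by rw [Nat.ModEq]; omega) h)
  exact form_five_aux (by positivity) (by exact_mod_cast (by have := hp.pos; omega))
    (by exact_mod_cast h) hj (by push_cast; omega)

end Residues

/-! ### Universal sums of three and four triangular numbers -/

lemma eight_mul_T (x : ℤ) : 8 * T x + 1 = (2 * x + 1) ^ 2 := by
  have h : 2 * (x * (x + 1) / 2) = x * (x + 1) :=
    Int.mul_ediv_cancel' (Int.even_mul_succ_self x).two_dvd
  rw [T]
  linear_combination 4 * h

lemma exists_T {X : ℤ} (hX : X % 2 = 1) : ∃ x : ℤ, 8 * T x + 1 = X ^ 2 :=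
  ⟨X / 2, by rw [eight_mul_T]; congr 1; omega⟩

lemma sq_mod (x : ℤ) : (x % 2 = 1 ∧ x ^ 2 % 8 = 1) ∨ (x % 4 = 0 ∧ x ^ 2 % 16 = 0) ∨
    (x % 4 = 2 ∧ x ^ 2 % 16 = 4) := by
  rcases (by omega : x % 2 = 1 ∨ x % 4 = 0 ∨ x % 4 = 2) with h | h | h
  · refine Or.inl ⟨h, ?_⟩
    obtain ⟨t, ht⟩ := exists_T h
    omega
  · refine Or.inr (Or.inl ⟨h, ?_⟩)
    obtain ⟨k, rfl⟩ : ∃ k, x = 4 * k := ⟨x / 4, by omega⟩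
    ring_nf; omega
  · refine Or.inr (Or.inr ⟨h, ?_⟩)
    obtain ⟨k, rfl⟩ : ∃ k, x = 4 * k + 2 := ⟨x / 4, by omega⟩
    ring_nf; omega

lemma three_squares_one {N : ℕ} (hN : N % 4 = 1) : ∃ x y z : ℤ, (N : ℤ) = x ^ 2 + y ^ 2 + z ^ 2 ∧
    x % 2 = 1 ∧ y % 2 = 0 ∧ z % 2 = 0 := by
  obtain ⟨x, y, z, h⟩ := three_squares (Or.inl hN)
  rcases sq_mod x with hx | hx | hx <;> rcases sq_mod y with hy | hy | hy <;>
    rcases sq_mod z with hz | hz | hz <;>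
    first
    | exact ⟨x, y, z, by omega⟩
    | exact ⟨y, x, z, by omega⟩
    | exact ⟨z, x, y, by omega⟩

lemma three_squares_two {N : ℕ} (hN : N % 4 = 2) : ∃ x y z : ℤ, (N : ℤ) = x ^ 2 + y ^ 2 + z ^ 2 ∧
    x % 2 = 1 ∧ y % 2 = 1 ∧ z % 2 = 0 := by
  obtain ⟨x, y, z, h⟩ := three_squares (Or.inr (Or.inl hN))
  rcases sq_mod x with hx | hx | hx <;> rcases sq_mod y with hy | hy | hy <;>
    rcases sq_mod z with hz | hz | hz <;>
    first
    | exact ⟨x, y, z, by omega⟩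
    | exact ⟨x, z, y, by omega⟩
    | exact ⟨y, z, x, by omega⟩

lemma three_squares_three {N : ℕ} (hN : N % 8 = 3) :
    ∃ x y z : ℤ, (N : ℤ) = x ^ 2 + y ^ 2 + z ^ 2 ∧ x % 2 = 1 ∧ y % 2 = 1 ∧ z % 2 = 1 := by
  obtain ⟨x, y, z, h⟩ := three_squares (Or.inr (Or.inr hN))
  rcases sq_mod x with hx | hx | hx <;> rcases sq_mod y with hy | hy | hy <;>
    rcases sq_mod z with hz | hz | hz <;>
    exact ⟨x, y, z, by omega⟩

/-- The sum `a T_x + b T_y + c T_z` represents every natural number. -/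
def Universal3 (a b c : ℤ) : Prop := ∀ n : ℕ, ∃ x y z : ℤ, a * T x + b * T y + c * T z = n

/-- The sum `a T_x + b T_y + c T_z + d T_w` represents every natural number. -/
def Universal4 (a b c d : ℤ) : Prop :=
  ∀ n : ℕ, ∃ x y z w : ℤ, a * T x + b * T y + c * T z + d * T w = n

/-- By `8 T_x + 1 = (2x + 1)²`, representing `n` by triangular numbers amounts to representing
`8n + a + b + c` by odd squares. -/
lemma exists_T_three {a b c : ℤ} {n : ℕ} {x y z : ℤ} (hx : x % 2 = 1) (hy : y % 2 = 1)
    (hz : z % 2 = 1) (h : a * x ^ 2 + b * y ^ 2 + c * z ^ 2 = 8 * n + a + b + c) :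
    ∃ x y z : ℤ, a * T x + b * T y + c * T z = n := by
  obtain ⟨u, hu⟩ := exists_T hx
  obtain ⟨v, hv⟩ := exists_T hy
  obtain ⟨w, hw⟩ := exists_T hz
  refine ⟨u, v, w, ?_⟩
  rw [← hu, ← hv, ← hw] at h
  linarith

lemma exists_T_four {a b c d : ℤ} {n : ℕ} {x y z w : ℤ} (hx : x % 2 = 1) (hy : y % 2 = 1)
    (hz : z % 2 = 1) (hw : w % 2 = 1)
    (h : a * x ^ 2 + b * y ^ 2 + c * z ^ 2 + d * w ^ 2 = 8 * n + a + b + c + d) :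
    ∃ x y z w : ℤ, a * T x + b * T y + c * T z + d * T w = n := by
  obtain ⟨t, ht⟩ := exists_T hx
  obtain ⟨u, hu⟩ := exists_T hy
  obtain ⟨v, hv⟩ := exists_T hz
  obtain ⟨s, hs⟩ := exists_T hw
  refine ⟨t, u, v, s, ?_⟩
  rw [← ht, ← hu, ← hv, ← hs] at h
  linarith

lemma universal_one_one_one : Universal3 1 1 1 := fun n => by
  obtain ⟨x, y, z, h, hx, hy, hz⟩ := three_squares_three (N := 8 * n + 3) (by omega)
  exact exists_T_three hx hy hz (by push_cast at h; linarith)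

lemma universal_one_one_two : Universal3 1 1 2 := fun n => by
  -- `(x + z)² + (x - z)² + 2y² = 2(x² + y² + z²)`
  obtain ⟨x, y, z, h, hx, hy, hz⟩ := three_squares_two (N := 4 * n + 2) (by omega)
  exact exists_T_three (x := x + z) (y := x - z) (z := y) (by omega) (by omega) hy
    (by push_cast at h; linarith)

lemma universal_one_one_four : Universal3 1 1 4 := fun n => by
  obtain ⟨x, y, z, h, hx, hy, hz⟩ := three_squares_two (N := 8 * n + 6) (by omega)
  obtain ⟨k, rfl⟩ : ∃ k, z = 2 * k := ⟨z / 2, by omega⟩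
  have hk : k % 2 = 1 := by
    rcases sq_mod x with h1 | h1 | h1 <;> rcases sq_mod y with h2 | h2 | h2 <;>
      rcases sq_mod (2 * k) with h3 | h3 | h3 <;> omega
  exact exists_T_three hx hy hk (by push_cast at h; linarith)

lemma universal_one_one_five : Universal3 1 1 5 := fun n => by
  by_cases h5 : (8 * n + 7) % 5 = 0
  · -- `(2x - y)² + (x + 2y)² = 5(x² + y²)`
    obtain ⟨x, y, z, h, hx, hy, hz⟩ := three_squares_three (N := (8 * n + 7) / 5) (by omega)
    have h' : (8 * n + 7 : ℤ) = 5 * (x ^ 2 + y ^ 2 + z ^ 2) := by omega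
    exact exists_T_three (x := 2 * x - y) (y := x + 2 * y) (z := z) (by omega) (by omega) hz
      (by linarith)
  · obtain ⟨x, y, z, h⟩ := form_five (N := 8 * n + 7) (by omega) h5
    rcases sq_mod x with hx | hx | hx <;> rcases sq_mod y with hy | hy | hy <;>
      rcases sq_mod z with hz | hz | hz <;>
      first
      | exact exists_T_three hx.1 hy.1 hz.1 (by push_cast at h; linarith)
      | omega

lemma universal_one_two_two : Universal3 1 2 2 := fun n => by
  obtain ⟨x, y, z, h, hx, hy, hz⟩ := three_squares_one (N := 8 * n + 5) (by omega)
  obtain ⟨k, rfl⟩ : ∃ k, y = 2 * k := ⟨y / 2, by omega⟩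
  obtain ⟨l, rfl⟩ : ∃ l, z = 2 * l := ⟨z / 2, by omega⟩
  have hk : (k + l) % 2 = 1 := by
    rcases sq_mod x with h1 | h1 | h1 <;> rcases sq_mod (2 * k) with h2 | h2 | h2 <;>
      rcases sq_mod (2 * l) with h3 | h3 | h3 <;> omega
  exact exists_T_three (x := x) (y := k + l) (z := k - l) hx hk (by omega)
    (by push_cast at h; linarith)

lemma universal_one_two_four : Universal3 1 2 4 := fun n => by
  obtain ⟨x, y, z, h, hx, hy, hz⟩ := three_squares_two (N := 16 * n + 14) (by omega)
  obtain ⟨u, v, rfl, rfl⟩ : ∃ u v, x = u + v ∧ y = u - v :=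
    ⟨(x + y) / 2, (x - y) / 2, by omega, by omega⟩
  obtain ⟨k, rfl⟩ : ∃ k, z = 2 * k := ⟨z / 2, by omega⟩
  have h' : (8 * n + 7 : ℤ) = u ^ 2 + v ^ 2 + 2 * k ^ 2 := by push_cast at h; linarith
  have hk : k % 2 = 1 ∧ ((u % 2 = 1 ∧ v % 4 = 2) ∨ (v % 2 = 1 ∧ u % 4 = 2)) := by
    rcases sq_mod u with h1 | h1 | h1 <;> rcases sq_mod v with h2 | h2 | h2 <;>
      rcases sq_mod k with h3 | h3 | h3 <;> omega
  obtain ⟨hk, ⟨hu, hv⟩ | ⟨hv, hu⟩⟩ := hk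
  · obtain ⟨l, rfl⟩ : ∃ l, v = 2 * l := ⟨v / 2, by omega⟩
    exact exists_T_three (x := u) (y := k) (z := l) hu hk (by omega) (by linarith)
  · obtain ⟨l, rfl⟩ : ∃ l, u = 2 * l := ⟨u / 2, by omega⟩
    exact exists_T_three (x := v) (y := k) (z := l) hv hk (by omega) (by linarith)

/-- For odd `X, Z` one has `X² + 3Z² = 4(u² + uv + v²)` with `v = Z` and `X = 2u + v`, so the sum is
governed by the form `y² + 2(u² + uv + v²)` at `4n + 3`; when `3` divides `n`, three squares
suffice. -/
lemma universal_one_two_three : Universal3 1 2 3 := fun n => by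
  by_cases h3 : (4 * n + 3) % 3 = 0
  · -- `(x - 2y)² + 2(x + y)² = 3(x² + 2y²)` at `x = u + v`, and `(u + v)² + (u - v)² = 2(u² + v²)`
    obtain ⟨u, v, y, h, hu, hv, hy⟩ := three_squares_one (N := 4 * (n / 3) + 1) (by omega)
    have h' : (4 * n + 3 : ℤ) = 3 * (u ^ 2 + v ^ 2 + y ^ 2) := by omega
    exact exists_T_three (x := u + v - 2 * y) (y := u + v + y) (z := u - v) (by omega) (by omega)
      (by omega) (by linarith)
  · obtain ⟨y, u, v, h⟩ := form_three_eisenstein (N := 4 * n + 3) (by omega) h3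
    have hy : y % 2 = 1 := by
      rcases sq_mod y with h1 | h1 | h1 <;> omega
    rcases Int.emod_two_eq_zero_or_one v with hv | hv
    · rcases Int.emod_two_eq_zero_or_one u with hu | hu
      · exfalso
        obtain ⟨k, rfl⟩ : ∃ k, u = 2 * k := ⟨u / 2, by omega⟩
        obtain ⟨l, rfl⟩ : ∃ l, v = 2 * l := ⟨v / 2, by omega⟩
        have : (4 * n + 3 : ℤ) = y ^ 2 + 8 * (k ^ 2 + k * l + l ^ 2) := by
          push_cast at h; linarith
        rcases sq_mod y with h1 | h1 | h1 <;> omega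
      · exact exists_T_three (x := 2 * v + u) (y := y) (z := u) (by omega) hy hu
          (by push_cast at h; linarith)
    · exact exists_T_three (x := 2 * u + v) (y := y) (z := v) (by omega) hy hv
          (by push_cast at h; linarith)

/-- The values missed by `T_x + T_y + 3 T_z`, such as `8`, are all congruent to `2` modulo `3`. -/
lemma one_one_three {n : ℕ} (hn : n % 3 ≠ 2) :
    ∃ x y z : ℤ, 1 * T x + 1 * T y + 3 * T z = n := by
  obtain ⟨x, y, z, h⟩ := form_three (N := 8 * n + 5) (by omega) (by omega)
  -- even `y, z` are made odd by `(k + 3l)² + 3(k - l)² = 4(k² + 3l²)`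
  have key : ∀ x y : ℤ, ((8 * n + 5 : ℕ) : ℤ) = x ^ 2 + y ^ 2 + 3 * z ^ 2 → x % 2 = 1 →
      y % 2 = 0 → z % 2 = 0 → (y % 4 = 0 ↔ z % 4 = 2) →
      ∃ x y z : ℤ, 1 * T x + 1 * T y + 3 * T z = n := by
    intro x y h hx hy hz hyz
    obtain ⟨k, rfl⟩ : ∃ k, y = 2 * k := ⟨y / 2, by omega⟩
    obtain ⟨l, rfl⟩ : ∃ l, z = 2 * l := ⟨z / 2, by omega⟩
    exact exists_T_three (x := x) (y := k + 3 * l) (z := k - l) hx (by omega) (by omega)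
      (by push_cast at h; linarith)
  rcases sq_mod x with hx | hx | hx <;> rcases sq_mod y with hy | hy | hy <;>
    rcases sq_mod z with hz | hz | hz <;>
    first
    | exact exists_T_three hx.1 hy.1 hz.1 (by push_cast at h; linarith)
    | exact key x y h (by omega) (by omega) (by omega) (by omega)
    | exact key y x (by linarith) (by omega) (by omega) (by omega) (by omega)

lemma Universal3.universal4 {a b c d : ℤ} (h : Universal3 a b c) : Universal4 a b c d :=
  fun n => by
    obtain ⟨x, y, z, h⟩ := h n
    exact ⟨x, y, z, 0, by simpa [T] using h⟩

lemma one_one_three_add {n : ℕ} {d : ℤ} (hn : n % 3 ≠ 2) :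
    ∃ x y z w : ℤ, 1 * T x + 1 * T y + 3 * T z + d * T w = n := by
  obtain ⟨x, y, z, h⟩ := one_one_three hn
  exact ⟨x, y, z, 0, by simpa [T] using h⟩

/-- If `n = 3m + 2` then `8n + 8 = 3(8m + 8)`, and a representation of `8m + 8` by
`x² + y² + 3z² + 3w²` gives one of `8n + 8` by `(3z)² + (3w)² + 3x² + 3y²`. -/
lemma universal_one_one_three_three : Universal4 1 1 3 3 := fun n => by
  induction n using Nat.strong_induction_on with
  | _ n ih =>
    by_cases hn : n % 3 = 2
    · obtain ⟨m, rfl⟩ : ∃ m, n = 3 * m + 2 := ⟨n / 3, by omega⟩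
      obtain ⟨x, y, z, w, h⟩ := ih m (by omega)
      exact exists_T_four (x := 3 * (2 * z + 1)) (y := 3 * (2 * w + 1)) (z := 2 * x + 1)
        (w := 2 * y + 1) (by omega) (by omega) (by omega) (by omega) (by
          rw [mul_pow, mul_pow]
          simp only [← eight_mul_T]
          push_cast; linarith)
    · exact one_one_three_add hn

/-- If `n = 3m + 2` then `8n + 11 = 3(8m + 9)`, and a representation of `m` by
`T_x + 2T_y + 3T_z` serves, with `9` as the square of a multiple of `3` that is left over. -/
lemma universal_one_one_three_six : Universal4 1 1 3 6 := fun n => by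
  by_cases hn : n % 3 = 2
  · obtain ⟨m, rfl⟩ : ∃ m, n = 3 * m + 2 := ⟨n / 3, by omega⟩
    obtain ⟨x, y, z, h⟩ := universal_one_two_three m
    exact exists_T_four (x := 3 * (2 * z + 1)) (y := 3) (z := 2 * x + 1)
      (w := 2 * y + 1) (by omega) (by omega) (by omega) (by omega) (by
        rw [mul_pow]
        simp only [← eight_mul_T]
        push_cast; linarith)
  · exact one_one_three_add hn

/-- For `n ≡ 2 mod 3` subtract `d` once, which leaves the residue class `2`. -/
lemma universal_one_one_three_of {d : ℕ} (hd : d % 3 ≠ 0) (hd8 : d ≤ 8) :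
    Universal4 1 1 3 d := fun n => by
  by_cases hn : n % 3 = 2
  · by_cases hnd : d ≤ n
    · obtain ⟨x, y, z, h⟩ := one_one_three (n := n - d) (by omega)
      exact ⟨x, y, z, 1, by push_cast [hnd] at h; simp [T] at h ⊢; linarith⟩
    · obtain rfl | rfl : n = 2 ∨ n = 5 := by omega
      · exact ⟨1, 1, 0, 0, by simp [T]⟩
      · exact ⟨1, 1, 1, 0, by simp [T]⟩
  · exact one_one_three_add hn

/-! ### Escalation -/

lemma T_cases (x : ℤ) : T x = 0 ∨ T x = 1 ∨ T x = 3 ∨ T x = 6 ∨ 10 ≤ T x := by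
  by_cases h : -5 < x ∧ x < 4
  · have : x = -4 ∨ x = -3 ∨ x = -2 ∨ x = -1 ∨ x = 0 ∨ x = 1 ∨ x = 2 ∨ x = 3 := by omega
    rcases this with rfl | rfl | rfl | rfl | rfl | rfl | rfl | rfl <;> simp [T]
  · have h1 := eight_mul_T x
    have : 10 ≤ T x := by
      rcases (by omega : x ≤ -5 ∨ 4 ≤ x) with h | h <;> nlinarith
    omega

lemma T_nonneg (x : ℤ) : 0 ≤ T x := by
  have := T_cases x
  omega

/-- A tail of the sum whose coefficients are at least `m` takes no value strictly between `0` and `m`. -/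
lemma sum_eq_zero_or_le {k : ℕ} {b : Fin k → ℤ} {m : ℤ} (hm : 0 ≤ m) (hb : ∀ i, m ≤ b i)
    (x : Fin k → ℤ) : ∑ i, b i * T (x i) = 0 ∨ m ≤ ∑ i, b i * T (x i) := by
  have hnn : ∀ i, 0 ≤ b i * T (x i) := fun i => mul_nonneg (hm.trans (hb i)) (T_nonneg _)
  by_cases h : ∀ i, T (x i) = 0
  · exact Or.inl (Finset.sum_eq_zero fun i _ => by rw [h i, mul_zero])
  · right
    push Not at h
    obtain ⟨i, hi⟩ := h
    have h1 : 1 ≤ T (x i) := by have := T_nonneg (x i); omega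
    calc m ≤ b i * T (x i) := by nlinarith [hb i]
      _ ≤ _ := Finset.single_le_sum (f := fun i => b i * T (x i)) (fun i _ => hnn i)
        (Finset.mem_univ i)

lemma exists_sum_of_universal3 {k : ℕ} {b : Fin (k + 3) → ℤ} (h : Universal3 (b 0) (b 1) (b 2))
    (n : ℕ) : ∃ x : Fin (k + 3) → ℤ, ∑ i, b i * T (x i) = (n : ℤ) := by
  obtain ⟨x, y, z, h⟩ := h n
  refine ⟨Fin.cons x (Fin.cons y (Fin.cons z fun _ => 0)), ?_⟩
  simp only [Fin.sum_univ_succ, Fin.cons_zero, Fin.cons_succ]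
  have : T 0 = 0 := by simp [T]
  simp only [this, mul_zero, Finset.sum_const_zero, ← h, add_zero]
  exact (add_assoc _ _ _).symm

lemma exists_sum_of_universal4 {k : ℕ} {b : Fin (k + 4) → ℤ}
    (h : Universal4 (b 0) (b 1) (b 2) (b 3)) (n : ℕ) :
    ∃ x : Fin (k + 4) → ℤ, ∑ i, b i * T (x i) = (n : ℤ) := by
  obtain ⟨x, y, z, w, h⟩ := h n
  refine ⟨Fin.cons x (Fin.cons y (Fin.cons z (Fin.cons w fun _ => 0))), ?_⟩
  simp only [Fin.sum_univ_succ, Fin.cons_zero, Fin.cons_succ]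
  have : T 0 = 0 := by simp [T]
  simp only [this, mul_zero, Finset.sum_const_zero, ← h, add_zero]
  exact (add_assoc _ _ _).symm.trans (add_assoc _ _ _).symm

theorem theorem_of_eight (k : ℕ) (b : Fin k → ℤ) (hb : ∀ i, 0 < b i)
    (hmono : Monotone b) :
    (∀ n : ℕ, ∃ x : Fin k → ℤ, ∑ i, b i * T (x i) = (n : ℤ)) ↔
    (∀ n ∈ ({1, 2, 4, 5, 8} : Set ℤ), ∃ x : Fin k → ℤ, ∑ i, b i * T (x i) = n) := by
  constructor
  · intro h n hn
    obtain ⟨m, rfl⟩ : ∃ m : ℕ, n = m := by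
      refine ⟨n.toNat, ?_⟩
      rcases hn with rfl | rfl | rfl | rfl | rfl <;> rfl
    exact h m
  · intro h
    obtain ⟨x1, h1⟩ := h 1 (by simp)
    obtain ⟨x2, h2⟩ := h 2 (by simp)
    obtain ⟨x4, h4⟩ := h 4 (by simp)
    obtain ⟨x5, h5⟩ := h 5 (by simp)
    obtain ⟨x8, h8⟩ := h 8 (by simp)
    clear h
    rcases k with _ | k
    · simp at h1
    -- each further coefficient is bounded by the least number the preceding ones miss
    have hb0 : b 0 = 1 := by
      have := sum_eq_zero_or_le (hb 0).le (fun i => hmono (Fin.zero_le i)) x1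
      have := hb 0
      omega
    rcases k with _ | k
    · simp only [Fin.sum_univ_succ, Finset.univ_eq_empty, Finset.sum_empty, hb0] at h2
      have := T_cases (x2 0)
      omega
    rw [Fin.sum_univ_succ, hb0] at h2 h4 h5 h8
    have hb1 : b 1 = 1 ∨ b 1 = 2 := by
      have h := sum_eq_zero_or_le (b := fun i : Fin (k + 1) => b i.succ) (hb 1).le
        (fun i => hmono (Fin.succ_le_succ_iff.mpr (Fin.zero_le i)))
        (fun i => x2 i.succ)
      have := hb 1
      have := T_cases (x2 0)
      omega
    rcases k with _ | k
    · exfalso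
      simp only [Fin.sum_univ_succ, Finset.univ_eq_empty, Finset.sum_empty] at h4 h5
      change _ + (b 1 * _ + _) = _ at h4 h5
      have c1 := T_cases (x4 0)
      have c2 := T_cases (x4 (Fin.succ 0))
      have c3 := T_cases (x5 0)
      have c4 := T_cases (x5 (Fin.succ 0))
      rcases hb1 with h | h <;> rw [h] at h4 h5 <;> omega
    rw [Fin.sum_univ_succ] at h4 h5 h8
    change _ + (b 1 * _ + _) = _ at h4 h5 h8
    have hle : b 1 ≤ b 2 :=
      hmono (Fin.succ_le_succ_iff.mpr (Fin.zero_le (Fin.succ (0 : Fin (k + 1)))))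
    have hmin2 : ∀ i : Fin (k + 1), b 2 ≤ b i.succ.succ := fun i => hmono
      (Fin.succ_le_succ_iff.mpr (Fin.succ_le_succ_iff.mpr (Fin.zero_le i)))
    have hb2 : (b 1 = 1 → b 2 ≤ 5) ∧ (b 1 = 2 → b 2 ≤ 4) := by
      have e4 := sum_eq_zero_or_le (hb 2).le hmin2 (fun i => x4 i.succ.succ)
      have e5 := sum_eq_zero_or_le (hb 2).le hmin2 (fun i => x5 i.succ.succ)
      have c1 := T_cases (x4 0)
      have c2 := T_cases (x4 (Fin.succ 0))
      have c3 := T_cases (x5 0)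
      have c4 := T_cases (x5 (Fin.succ 0))
      constructor <;> intro h <;> rw [h] at h4 h5 <;> by_contra hc <;> omega
    have hcases : (b 1 = 1 ∧ b 2 = 3) ∨ Universal3 (b 0) (b 1) (b 2) := by
      rw [hb0]
      rcases hb1 with h | h <;> rw [h]
      · have : b 2 = 1 ∨ b 2 = 2 ∨ b 2 = 3 ∨ b 2 = 4 ∨ b 2 = 5 := by omega
        rcases this with h' | h' | h' | h' | h' <;> rw [h']
        · exact Or.inr universal_one_one_one
        · exact Or.inr universal_one_one_two
        · exact Or.inl ⟨rfl, rfl⟩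
        · exact Or.inr universal_one_one_four
        · exact Or.inr universal_one_one_five
      · have : b 2 = 2 ∨ b 2 = 3 ∨ b 2 = 4 := by omega
        rcases this with h' | h' | h' <;> rw [h']
        · exact Or.inr universal_one_two_two
        · exact Or.inr universal_one_two_three
        · exact Or.inr universal_one_two_four
    obtain ⟨hb1, hb2⟩ | hu := hcases
    · have c1 := T_cases (x8 0)
      have c2 := T_cases (x8 (Fin.succ 0))
      have c3 := T_cases (x8 (Fin.succ (Fin.succ 0)))
      rw [Fin.sum_univ_succ] at h8
      change _ + (_ + (b 2 * _ + _)) = _ at h8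
      rw [hb1, hb2] at h8
      rcases k with _ | k
      · exfalso
        simp only [Finset.univ_eq_empty, Finset.sum_empty] at h8
        omega
      have hle : b 2 ≤ b 3 := hmono (Fin.succ_le_succ_iff.mpr (Fin.succ_le_succ_iff.mpr
        (Fin.zero_le (Fin.succ (0 : Fin (k + 1))))))
      have hmin3 : ∀ i : Fin (k + 1), b 3 ≤ b i.succ.succ.succ := fun i => hmono
        (Fin.succ_le_succ_iff.mpr (Fin.succ_le_succ_iff.mpr (Fin.succ_le_succ_iff.mpr
          (Fin.zero_le i))))
      have e8 := sum_eq_zero_or_le (hb 3).le hmin3 (fun i => x8 i.succ.succ.succ)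
      refine exists_sum_of_universal4 ?_
      have : b 3 = 3 ∨ b 3 = 4 ∨ b 3 = 5 ∨ b 3 = 6 ∨ b 3 = 7 ∨ b 3 = 8 := by omega
      rw [hb0, hb1, hb2]
      rcases this with h' | h' | h' | h' | h' | h' <;> rw [h']
      · exact universal_one_one_three_three
      · exact universal_one_one_three_of (d := 4) (by norm_num) (by norm_num)
      · exact universal_one_one_three_of (d := 5) (by norm_num) (by norm_num)
      · exact universal_one_one_three_six
      · exact universal_one_one_three_of (d := 7) (by norm_num) (by norm_num)
      · exact universal_one_one_three_of (d := 8) (by norm_num) (by norm_num)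
    · exact exists_sum_of_universal3 hu
end

section
/- (Liouville, one direction) Each of the triangular forms aT_x + bT_y + cT_z for (a,b,c) ∈ {(1,1,1), (1,1,2), (1,1,4), (1,1,5), (1,2,2), (1,2,3), (1,2,4)} represents every nonnegative integer. -/
/-! ### Reduction of positive definite forms of determinant one -/

theorem exists_shift_s10 (p q : ℤ) (hp : 0 < p) :
    ∃ t : ℤ, -p ≤ 2 * (q + p * t) ∧ 2 * (q + p * t) ≤ p := by
  refine ⟨-((2 * q + p) / (2 * p)), ?_, ?_⟩
  · have := Int.ediv_mul_le (2 * q + p) (b := 2 * p) (by omega)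
    linarith
  · have := Int.lt_ediv_add_one_mul_self (2 * q + p) (b := 2 * p) (by omega)
    linarith

/-- The numerical end of Hermite's argument: the two bounds combine to `27 a ^ 3 ≤ 64`. -/
theorem eq_one_of_bounds {a g : ℤ} (ha : 0 < a) (h₁ : 3 * g ^ 2 ≤ 4 * a)
    (h₂ : 3 * a ^ 2 ≤ 4 * g) : a = 1 := by
  by_contra hne
  have ha2 : 2 ≤ a := by omega
  have h7 : (3 * a ^ 2) ^ 2 ≤ (4 * g) ^ 2 := pow_le_pow_left₀ (by positivity) h₂ 2
  have h8 : 2 ^ 3 ≤ a ^ 3 := pow_le_pow_left₀ (by norm_num) ha2 3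
  have h9 : 2 ^ 3 * a ≤ a ^ 3 * a := mul_le_mul_of_nonneg_right h8 ha.le
  have h10 : (3 * a ^ 2) ^ 2 = 9 * (a ^ 3 * a) := by ring
  linarith

/-- Lagrange reduction: a positive definite binary form `p X² + 2 q X Y + r Y²` of determinant `D`
takes a value at most `√(4 D / 3)` at the first vector `(α, γ)` of some basis of `ℤ²`. -/
theorem binary_reduction (m : ℕ) : ∀ p q r : ℤ, p.toNat ≤ m → 0 < p → 0 < p * r - q ^ 2 →
    ∃ α β γ δ : ℤ, α * δ - β * γ = 1 ∧ 0 < p * α ^ 2 + 2 * q * α * γ + r * γ ^ 2 ∧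
      3 * (p * α ^ 2 + 2 * q * α * γ + r * γ ^ 2) ^ 2 ≤ 4 * (p * r - q ^ 2) := by
  induction m with
  | zero => intro p q r hm hp; omega
  | succ m ih =>
    intro p q r hm hp hD
    obtain ⟨t, ht1, ht2⟩ := exists_shift_s10 p q hp
    -- Translate to `2 |q'| ≤ p`; if the last coefficient is then smaller than `p`, swap and recurse.
    set q' := q + p * t with hq'
    set r' := r + 2 * q * t + p * t ^ 2 with hr'
    have hD' : p * r' - q' ^ 2 = p * r - q ^ 2 := by rw [hq', hr']; ring
    by_cases hlt : r' < p
    · have hr0 : 0 < r' := by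
        by_contra hcon
        nlinarith [sq_nonneg q']
      obtain ⟨α, β, γ, δ, h1, h2, h3⟩ := ih r' (-q') p (by omega) hr0 (by linarith)
      refine ⟨t * α - γ, t * β - δ, α, β, by linarith, ?_, ?_⟩
      · have : p * (t * α - γ) ^ 2 + 2 * q * (t * α - γ) * α + r * α ^ 2 =
            r' * α ^ 2 + 2 * -q' * α * γ + p * γ ^ 2 := by rw [hq', hr']; ring
        rw [this]; exact h2
      · have : p * (t * α - γ) ^ 2 + 2 * q * (t * α - γ) * α + r * α ^ 2 =
            r' * α ^ 2 + 2 * -q' * α * γ + p * γ ^ 2 := by rw [hq', hr']; ring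
        rw [this]; linarith
    · refine ⟨1, 0, 0, 1, by norm_num, by linarith, ?_⟩
      have : 4 * q' ^ 2 ≤ p ^ 2 := by nlinarith
      nlinarith

/-- Every value of a positive definite integral ternary form of determinant `1` is a sum of three
squares. The induction is on the first coefficient `a`. Completing the square gives
`a F = (a X + f Y + e Z)² + G(Y, Z)` with `det G = a`; after reducing `G` and translating `X` so that
`2 |f| ≤ a`, either the new coefficient of `Y²` is smaller than `a`, or `a = 1` and the form splits
explicitly. -/
theorem ternary_values (m : ℕ) : ∀ a b c d e f : ℤ, a.toNat ≤ m → 0 < a → 0 < a * b - f ^ 2 →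
    a * b * c + 2 * d * e * f - a * d ^ 2 - b * e ^ 2 - c * f ^ 2 = 1 →
    ∀ x y z : ℤ, ∃ u v w : ℤ, u ^ 2 + v ^ 2 + w ^ 2 =
      a * x ^ 2 + b * y ^ 2 + c * z ^ 2 + 2 * d * y * z + 2 * e * x * z + 2 * f * x * y := by
  induction m with
  | zero => intro a b c d e f hm ha; omega
  | succ m ih =>
    intro a b c d e f hm ha hab hdet x y z
    have hG : (a * b - f ^ 2) * (a * c - e ^ 2) - (a * d - e * f) ^ 2 = a := by
      linear_combination a * hdet
    obtain ⟨α, β, γ, δ, h1, h2, h3⟩ := binary_reduction _ (a * b - f ^ 2) (a * d - e * f)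
      (a * c - e ^ 2) le_rfl hab (by rw [hG]; exact ha)
    rw [hG] at h3
    set g := (a * b - f ^ 2) * α ^ 2 + 2 * (a * d - e * f) * α * γ + (a * c - e ^ 2) * γ ^ 2 with hg
    -- Coefficients after the substitution `Y ↦ α Y + β Z`, `Z ↦ γ Y + δ Z`.
    set f₁ := f * α + e * γ with hf₁
    set e₁ := f * β + e * δ with he₁
    set b₁ := b * α ^ 2 + 2 * d * α * γ + c * γ ^ 2 with hb₁
    set c₁ := b * β ^ 2 + 2 * d * β * δ + c * δ ^ 2 with hc₁
    set d₁ := b * α * β + d * (α * δ + β * γ) + c * γ * δ with hd₁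
    have hdet₁ : a * b₁ * c₁ + 2 * d₁ * e₁ * f₁ - a * d₁ ^ 2 - b₁ * e₁ ^ 2 - c₁ * f₁ ^ 2 = 1 := by
      have : a * b₁ * c₁ + 2 * d₁ * e₁ * f₁ - a * d₁ ^ 2 - b₁ * e₁ ^ 2 - c₁ * f₁ ^ 2 =
        (a * b * c + 2 * d * e * f - a * d ^ 2 - b * e ^ 2 - c * f ^ 2) * (α * δ - β * γ) ^ 2 := by
        simp only [hf₁, he₁, hb₁, hc₁, hd₁]; ring
      rw [this, hdet, h1]; norm_num
    obtain ⟨t, ht1, ht2⟩ := exists_shift_s10 a f₁ ha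
    -- Coefficients after the further substitution `X ↦ X + t Y`.
    set f₂ := f₁ + a * t with hf₂
    set b₂ := b₁ + 2 * f₁ * t + a * t ^ 2 with hb₂
    set d₂ := d₁ + e₁ * t with hd₂
    have hg₂ : a * b₂ - f₂ ^ 2 = g := by
      simp only [hf₂, hb₂, hg, hf₁, hb₁]; ring
    have hdet₂ : a * b₂ * c₁ + 2 * d₂ * e₁ * f₂ - a * d₂ ^ 2 - b₂ * e₁ ^ 2 - c₁ * f₂ ^ 2 = 1 := by
      rw [← hdet₁]; simp only [hf₂, hb₂, hd₂]; ring
    -- the point `(x, y, z)` in the coordinates of the transformed form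
    obtain ⟨y₁, z₁, hy, hz⟩ : ∃ y₁ z₁ : ℤ, y = α * y₁ + β * z₁ ∧ z = γ * y₁ + δ * z₁ :=
      ⟨δ * y - β * z, α * z - γ * y, by linear_combination (-y) * h1,
        by linear_combination (-z) * h1⟩
    obtain ⟨x₁, hx⟩ : ∃ x₁ : ℤ, x = x₁ + t * y₁ := ⟨x - t * y₁, by ring⟩
    have hval : a * x ^ 2 + b * y ^ 2 + c * z ^ 2 + 2 * d * y * z + 2 * e * x * z + 2 * f * x * y =
        a * x₁ ^ 2 + b₂ * y₁ ^ 2 + c₁ * z₁ ^ 2 + 2 * d₂ * y₁ * z₁ + 2 * e₁ * x₁ * z₁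
          + 2 * f₂ * x₁ * y₁ := by
      simp only [hx, hy, hz, hf₂, hb₂, hd₂, hf₁, he₁, hb₁, hc₁, hd₁]; ring
    rw [hval]
    have hb₂0 : 0 < b₂ := by
      by_contra hcon
      have := mul_nonneg ha.le (neg_nonneg.2 (not_lt.1 hcon))
      linarith [sq_nonneg f₂]
    by_cases hlt : b₂ < a
    · obtain ⟨u, v, w, h⟩ := ih b₂ a c₁ e₁ d₂ f₂ (by omega) hb₂0 (by linarith)
        (by linarith) y₁ x₁ z₁
      exact ⟨u, v, w, by rw [h]; ring⟩
    · have h4 : (2 * f₂) ^ 2 ≤ a ^ 2 := sq_le_sq' (by linarith) ht2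
      have h5 : 3 * a ^ 2 ≤ 4 * g := by
        have := mul_le_mul_of_nonneg_left (not_lt.1 hlt) ha.le
        linarith
      have h6 : a = 1 := eq_one_of_bounds ha h3 h5
      have hf₂0 : f₂ = 0 := by omega
      have hg1 : g = 1 := by
        have : g < 2 := by
          by_contra hcon
          nlinarith only [h3, h6, hcon]
        omega
      rw [h6, hf₂0] at hg₂ hdet₂
      have hb₂1 : b₂ = 1 := by linarith
      rw [hb₂1] at hdet₂
      rw [h6, hf₂0, hb₂1]
      exact ⟨x₁ + e₁ * z₁, y₁ + d₂ * z₁, z₁, by linear_combination (-z₁ ^ 2) * hdet₂⟩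

/-! ### The three squares theorem away from `0`, `4`, `7` modulo `8` -/

theorem exists_dvd_sq_add {p d : ℕ} (hp : p.Prime) (h : jacobiSym (-d : ℤ) p = 1) :
    ∃ β : ℤ, (p : ℤ) ∣ β ^ 2 + d := by
  have : Fact p.Prime := ⟨hp⟩
  rw [← jacobiSym.legendreSym.to_jacobiSym] at h
  have h0 : ((-d : ℤ) : ZMod p) ≠ 0 := by
    intro h0
    rw [(legendreSym.eq_zero_iff p _).2 h0] at h
    norm_num at h
  obtain ⟨r, hr⟩ := (legendreSym.eq_one_iff p h0).1 h
  obtain ⟨β, rfl⟩ := ZMod.intCast_surjective r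
  refine ⟨β, (ZMod.intCast_zmod_eq_zero_iff_dvd _ p).1 ?_⟩
  push_cast at hr ⊢
  linear_combination -hr

theorem exists_dvd_sq_add_two {p d : ℕ} (hp : p.Prime) (hp2 : p % 2 = 1) (hd : d % 2 = 1)
    (h : jacobiSym (-d : ℤ) p = 1) : ∃ β : ℤ, (2 * p : ℤ) ∣ β ^ 2 + d := by
  obtain ⟨β, hβ⟩ := exists_dvd_sq_add hp h
  have key : ∀ γ : ℤ, γ % 2 = 1 → (p : ℤ) ∣ γ ^ 2 + d → (2 * p : ℤ) ∣ γ ^ 2 + d := by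
    intro γ hγ hpγ
    refine IsCoprime.mul_dvd ?_ ?_ hpγ
    · rw [Int.isCoprime_iff_gcd_eq_one]
      exact (Nat.coprime_two_left (n := p)).2 (Nat.odd_iff.2 hp2)
    · have h1 : Odd (γ ^ 2) := (Int.odd_iff.2 hγ).pow
      have h2 : Odd (d : ℤ) := Int.odd_iff.2 (by omega)
      exact (h1.add_odd h2).two_dvd
  -- Adding the odd number `p` changes the parity of the square root.
  rcases Int.emod_two_eq_zero_or_one β with h0 | h1
  · refine ⟨β + p, key (β + p) (by omega) ?_⟩
    have : (β + p) ^ 2 + (d : ℤ) = (β ^ 2 + d) + p * (2 * β + p) := by ring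
    rw [this]
    exact dvd_add hβ (dvd_mul_right _ _)
  · exact ⟨β, key β h1 hβ⟩

/-- If `-d` is a square modulo `d n - 1`, say `β ^ 2 + d = (d n - 1) k`, then the form with matrix
`!![k, β, 1; β, d n - 1, 0; 1, 0, n]` is positive definite of determinant `1` and takes the value
`n` at `(0, 0, 1)`. -/
theorem sum_three_sq_of_dvd {n d β : ℤ} (hd : 0 < d) (hpos : 0 < d * n - 1)
    (h : d * n - 1 ∣ β ^ 2 + d) : ∃ x y z : ℤ, x ^ 2 + y ^ 2 + z ^ 2 = n := by
  obtain ⟨k, hk⟩ := h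
  have hk0 : 0 < k := by
    by_contra hcon
    nlinarith [sq_nonneg β]
  obtain ⟨u, v, w, h⟩ := ternary_values _ k (d * n - 1) n 0 1 β le_rfl hk0
    (by linarith) (by linear_combination (-n) * hk) 0 0 1
  exact ⟨u, v, w, by rw [h]; ring⟩

/-- By Dirichlet's theorem some `p = d n - 1` with `d = 4 j + 1` is a prime `≡ 1 [MOD 4]`; then
`(-d / p) = (p / d) = (-1 / d) = 1`. -/
theorem sum_three_sq_two_mod_four {n : ℕ} (h : n % 4 = 2) :
    ∃ x y z : ℤ, x ^ 2 + y ^ 2 + z ^ 2 = n := by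
  have hcop : (n - 1).Coprime (4 * n) := by
    apply Nat.Coprime.mul_right
    · exact Nat.Coprime.pow_right 2 (Nat.coprime_two_right.2 (Nat.odd_iff.2 (by omega)))
    · have := Nat.coprime_self_add_right (m := n - 1) (n := 1)
      rw [show n - 1 + 1 = n by omega] at this
      exact this.2 (Nat.coprime_one_right _)
  obtain ⟨p, hpn, hp, hmod⟩ := Nat.forall_exists_prime_gt_and_modEq n (by omega) hcop
  obtain ⟨j, hj⟩ := (Nat.modEq_iff_dvd' (by omega)).1 hmod.symm
  set d := 4 * j + 1 with hd
  have hpd : (p : ℤ) = d * n - 1 := by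
    have : p = 4 * n * j + n - 1 := by omega
    have h2 : p + 1 = d * n := by rw [hd, add_mul]; rw [mul_right_comm] at this; omega
    have h3 : (p : ℤ) + 1 = d * n := by exact_mod_cast h2
    linarith
  have hp4 : p % 4 = 1 := by
    rw [mul_assoc] at hj
    omega
  have hd4 : d % 4 = 1 := by omega
  have hjac : jacobiSym (-d : ℤ) p = 1 := by
    rw [jacobiSym.neg _ (Nat.odd_iff.2 (by omega)), ZMod.χ₄_nat_one_mod_four hp4, one_mul,
      jacobiSym.quadratic_reciprocity_one_mod_four hd4 (Nat.odd_iff.2 (by omega)),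
      jacobiSym.mod_left' (a₂ := -1), jacobiSym.at_neg_one (Nat.odd_iff.2 (by omega)),
      ZMod.χ₄_nat_one_mod_four hd4]
    rw [hpd]
    exact Int.ModEq.symm (Int.modEq_iff_dvd.2 ⟨n, by ring⟩)
  obtain ⟨β, hβ⟩ := exists_dvd_sq_add hp hjac
  rw [hpd] at hβ
  exact sum_three_sq_of_dvd (by omega) (by rw [← hpd]; exact_mod_cast hp.pos) hβ

/-- Here `d n - 1` is even for odd `d`, so Dirichlet's theorem is applied to make it twice a prime
`p`, with `d = 8 j + c`. The parameter `c`, depending on `n` modulo `8`, is chosen so that quadratic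
reciprocity and `(2 / d) (p / d) = (-1 / d)` give `(-d / p) = 1`. -/
theorem sum_three_sq_odd {n c : ℕ} (h : n % 8 = 1 ∧ c = 3 ∨ n % 8 = 3 ∧ c = 1 ∨ n % 8 = 5 ∧ c = 3) :
    ∃ x y z : ℤ, x ^ 2 + y ^ 2 + z ^ 2 = n := by
  obtain ⟨r, hr⟩ : ∃ r, c * n = 2 * r + 1 := by
    rcases h with ⟨h, rfl⟩ | ⟨h, rfl⟩ | ⟨h, rfl⟩
    · exact ⟨(3 * n - 1) / 2, by omega⟩
    · exact ⟨(1 * n - 1) / 2, by omega⟩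
    · exact ⟨(3 * n - 1) / 2, by omega⟩
  have hcop : r.Coprime (4 * n) := by
    apply Nat.Coprime.mul_right
    · refine Nat.Coprime.pow_right 2 (Nat.coprime_two_right.2 (Nat.odd_iff.2 ?_))
      rcases h with ⟨h, rfl⟩ | ⟨h, rfl⟩ | ⟨h, rfl⟩ <;> omega
    · apply Nat.isCoprime_iff_coprime.1
      refine ⟨-2, c, ?_⟩
      have : (c : ℤ) * n = 2 * r + 1 := by exact_mod_cast hr
      linarith
  obtain ⟨p, hpn, hp, hmod⟩ := Nat.forall_exists_prime_gt_and_modEq r (q := 4 * n) (by omega) hcop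
  obtain ⟨j, hj⟩ := (Nat.modEq_iff_dvd' (by omega)).1 hmod.symm
  set d := 8 * j + c with hd
  have hpd : (2 * p : ℤ) = d * n - 1 := by
    have h1 : p = 4 * n * j + r := by omega
    have h2 : (p : ℤ) = 4 * n * j + r := by exact_mod_cast h1
    have h3 : (c : ℤ) * n = 2 * r + 1 := by exact_mod_cast hr
    rw [h2, hd]; push_cast; linear_combination -h3
  have hpr : p % 4 = r % 4 := by
    rw [mul_assoc] at hj
    omega
  have hdodd : Odd d := Nat.odd_iff.2 (by rcases h with ⟨h, rfl⟩ | ⟨h, rfl⟩ | ⟨h, rfl⟩ <;> omega)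
  have hpodd : Odd p := Nat.odd_iff.2 (by rcases h with ⟨h, rfl⟩ | ⟨h, rfl⟩ | ⟨h, rfl⟩ <;> omega)
  -- `2 p = d n - 1 ≡ -1` modulo `d`.
  have hprod : jacobiSym 2 d * jacobiSym p d = jacobiSym (-1) d := by
    rw [← jacobiSym.mul_left]
    apply jacobiSym.mod_left'
    rw [hpd]
    exact Int.ModEq.symm (Int.modEq_iff_dvd.2 ⟨n, by ring⟩)
  rw [jacobiSym.at_two hdodd, jacobiSym.at_neg_one hdodd, ZMod.χ₈_nat_eq_if_mod_eight] at hprod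
  have hjac : jacobiSym (-d : ℤ) p = 1 := by
    rw [jacobiSym.neg _ hpodd]
    rcases h with ⟨h, rfl⟩ | ⟨h, rfl⟩ | ⟨h, rfl⟩
    · rw [if_neg (by omega), if_neg (by omega), ZMod.χ₄_nat_three_mod_four (by omega)] at hprod
      rw [ZMod.χ₄_nat_one_mod_four (by omega),
        ← jacobiSym.quadratic_reciprocity_one_mod_four (by omega) hdodd]
      linarith
    · rw [if_neg (by omega), if_pos (by omega), ZMod.χ₄_nat_one_mod_four (by omega)] at hprod
      rw [jacobiSym.quadratic_reciprocity_one_mod_four (by omega) hpodd]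
      rw [ZMod.χ₄_nat_one_mod_four (by omega)]
      linarith
    · rw [if_neg (by omega), if_neg (by omega), ZMod.χ₄_nat_three_mod_four (by omega)] at hprod
      rw [ZMod.χ₄_nat_three_mod_four (by omega),
        jacobiSym.quadratic_reciprocity_three_mod_four (by omega) (by omega)]
      linarith
  obtain ⟨β, hβ⟩ := exists_dvd_sq_add_two hp (Nat.odd_iff.1 hpodd) (Nat.odd_iff.1 hdodd) hjac
  rw [hpd] at hβ
  exact sum_three_sq_of_dvd (by have := hdodd.pos; omega)
    (by rw [← hpd]; exact_mod_cast Nat.mul_pos two_pos hp.pos) hβ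

/-- The part of the Legendre–Gauss three squares theorem needed below. -/
theorem sum_three_sq {n : ℕ} (h : n % 4 = 1 ∨ n % 4 = 2 ∨ n % 8 = 3) :
    ∃ x y z : ℤ, x ^ 2 + y ^ 2 + z ^ 2 = n := by
  by_cases h2 : n % 4 = 2
  · exact sum_three_sq_two_mod_four h2
  by_cases h3 : n % 8 = 3
  · exact sum_three_sq_odd (Or.inr (Or.inl ⟨h3, rfl⟩))
  by_cases h1 : n % 8 = 1
  · exact sum_three_sq_odd (Or.inl ⟨h1, rfl⟩)
  · exact sum_three_sq_odd (Or.inr (Or.inr ⟨by omega, rfl⟩))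

/-! ### From triangular numbers to odd squares -/

/-- Completing the square: `8 T x + 1 = (2 x + 1)²`. -/
theorem exists_T_of_odd {a b c n X Y Z : ℤ} (hX : X % 2 = 1) (hY : Y % 2 = 1) (hZ : Z % 2 = 1)
    (h : a * X ^ 2 + b * Y ^ 2 + c * Z ^ 2 = 8 * n + a + b + c) :
    ∃ x y z : ℤ, a * T x + b * T y + c * T z = n := by
  have hT : ∀ X : ℤ, X % 2 = 1 → ∃ x, X ^ 2 = 8 * T x + 1 := by
    intro X hX
    have h1 : X = 2 * (X / 2) + 1 := by omega
    have h2 : 2 * T (X / 2) = X / 2 * (X / 2 + 1) :=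
      Int.mul_ediv_cancel' (Int.even_mul_succ_self _).two_dvd
    exact ⟨X / 2, by linear_combination (X + 2 * (X / 2) + 1) * h1 - 4 * h2⟩
  obtain ⟨x, hx⟩ := hT X hX
  obtain ⟨y, hy⟩ := hT Y hY
  obtain ⟨z, hz⟩ := hT Z hZ
  refine ⟨x, y, z, ?_⟩
  rw [hx, hy, hz] at h
  linarith

theorem sq_mod_eight (x : ℤ) : x % 2 = 1 ∧ x ^ 2 % 8 = 1 ∨ x % 4 = 2 ∧ x ^ 2 % 8 = 4 ∨
    x % 4 = 0 ∧ x ^ 2 % 8 = 0 := by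
  have h : x % 8 = 0 ∨ x % 8 = 1 ∨ x % 8 = 2 ∨ x % 8 = 3 ∨ x % 8 = 4 ∨ x % 8 = 5 ∨ x % 8 = 6 ∨
    x % 8 = 7 := by omega
  have hs : x ^ 2 % 8 = x % 8 * (x % 8) % 8 := by rw [pow_two, Int.mul_emod]
  rcases h with h | h | h | h | h | h | h | h <;> rw [h] at hs <;> omega

/-! ### The seven forms -/

theorem liouville_111 (n : ℕ) : ∃ x y z : ℤ, 1 * T x + 1 * T y + 1 * T z = (n : ℤ) := by
  obtain ⟨x, y, z, h⟩ := sum_three_sq (n := 8 * n + 3) (by omega)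
  push_cast at h
  rcases sq_mod_eight x with hx | hx | hx <;> rcases sq_mod_eight y with hy | hy | hy <;>
    rcases sq_mod_eight z with hz | hz | hz <;>
    first
    | (exfalso; omega)
    | exact exists_T_of_odd hx.1 hy.1 hz.1 (by linarith)

theorem sum_sq_two_mod_four {m : ℤ} (hm : m % 4 = 2) {x y z : ℤ}
    (h : x ^ 2 + y ^ 2 + z ^ 2 = m) :
    ∃ a b c : ℤ, a % 2 = 1 ∧ b % 2 = 1 ∧ c % 2 = 0 ∧ a ^ 2 + b ^ 2 + c ^ 2 = m := by
  rcases sq_mod_eight x with hx | hx | hx <;> rcases sq_mod_eight y with hy | hy | hy <;>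
    rcases sq_mod_eight z with hz | hz | hz <;>
    first
    | (exfalso; omega)
    | exact ⟨x, y, z, by omega, by omega, by omega, by linarith⟩
    | exact ⟨y, z, x, by omega, by omega, by omega, by linarith⟩
    | exact ⟨z, x, y, by omega, by omega, by omega, by linarith⟩

/-- From `a² + b² + c² = 4 n + 2` with `c` even, `(a + c)² + (a - c)² + 2 b² = 8 n + 4`. -/
theorem liouville_112 (n : ℕ) : ∃ x y z : ℤ, 1 * T x + 1 * T y + 2 * T z = (n : ℤ) := by
  obtain ⟨x, y, z, h⟩ := sum_three_sq (n := 4 * n + 2) (by omega)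
  push_cast at h
  obtain ⟨a, b, c, ha, hb, hc, h⟩ := sum_sq_two_mod_four (by omega) h
  exact exists_T_of_odd (X := a + c) (Y := a - c) (Z := b) (by omega) (by omega) hb
    (by linear_combination 2 * h)

/-- In `a² + b² + c² = 8 n + 6` with `c` even, `c` is twice an odd number. -/
theorem liouville_114 (n : ℕ) : ∃ x y z : ℤ, 1 * T x + 1 * T y + 4 * T z = (n : ℤ) := by
  obtain ⟨x, y, z, h⟩ := sum_three_sq (n := 8 * n + 6) (by omega)
  push_cast at h
  obtain ⟨a, b, c, ha, hb, hc, h⟩ := sum_sq_two_mod_four (by omega) h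
  obtain ⟨e, rfl⟩ : ∃ e, c = 2 * e := ⟨c / 2, by omega⟩
  have := sq_mod_eight a
  have := sq_mod_eight b
  have := sq_mod_eight (2 * e)
  exact exists_T_of_odd (X := a) (Y := b) (Z := e) ha hb (by omega)
    (by linear_combination h)

/-- Twice `X² + 2 Y² + 4 Z² = 8 n + 7` is `(X + 2 Z)² + (X - 2 Z)² + (2 Y)² = 16 n + 14`. -/
theorem liouville_124 (n : ℕ) : ∃ x y z : ℤ, 1 * T x + 2 * T y + 4 * T z = (n : ℤ) := by
  obtain ⟨x, y, z, h⟩ := sum_three_sq (n := 16 * n + 14) (by omega)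
  push_cast at h
  obtain ⟨a, b, c, ha, hb, hc, h⟩ := sum_sq_two_mod_four (by omega) h
  obtain ⟨e, rfl⟩ : ∃ e, c = 2 * e := ⟨c / 2, by omega⟩
  have he : e % 2 = 1 := by
    have := sq_mod_eight a
    have := sq_mod_eight b
    have := sq_mod_eight (2 * e)
    omega
  obtain ⟨u, v, rfl, rfl⟩ : ∃ u v, a = u + v ∧ b = u - v :=
    ⟨(a + b) / 2, (a - b) / 2, by omega, by omega⟩
  have h' : u ^ 2 + v ^ 2 + 2 * e ^ 2 = 8 * n + 7 := by linarith
  have he8 := sq_mod_eight e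
  have key : ∀ p q : ℤ, p % 2 = 1 → q % 4 = 2 → p ^ 2 + q ^ 2 + 2 * e ^ 2 = 8 * n + 7 →
      ∃ x y z : ℤ, 1 * T x + 2 * T y + 4 * T z = (n : ℤ) := by
    intro p q hp hq h
    obtain ⟨w, rfl⟩ : ∃ w, q = 2 * w := ⟨q / 2, by omega⟩
    exact exists_T_of_odd (X := p) (Y := e) (Z := w) hp he (by omega) (by linear_combination h)
  rcases sq_mod_eight u with hu | hu | hu <;> rcases sq_mod_eight v with hv | hv | hv <;>
    first
    | (exfalso; omega)
    | exact key u v (by omega) (by omega) h'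
    | exact key v u (by omega) (by omega) (by linarith)

/-- `X² + 2 Y² + 2 Z² = X² + (Y + Z)² + (Y - Z)²`, and the squares in a representation of `8 n + 5`
are `1`, `4`, `0` modulo `8` in some order. -/
theorem liouville_122 (n : ℕ) : ∃ x y z : ℤ, 1 * T x + 2 * T y + 2 * T z = (n : ℤ) := by
  obtain ⟨x, y, z, h⟩ := sum_three_sq (n := 8 * n + 5) (by omega)
  push_cast at h
  have key : ∀ a b c : ℤ, a % 2 = 1 → b % 4 = 2 → c % 4 = 0 → a ^ 2 + b ^ 2 + c ^ 2 = 8 * n + 5 →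
      ∃ x y z : ℤ, 1 * T x + 2 * T y + 2 * T z = (n : ℤ) := by
    intro a b c ha hb hc h
    obtain ⟨u, v, rfl, rfl⟩ : ∃ u v, b = u + v ∧ c = u - v :=
      ⟨(b + c) / 2, (b - c) / 2, by omega, by omega⟩
    exact exists_T_of_odd (X := a) (Y := u) (Z := v) ha (by omega) (by omega)
      (by linear_combination h)
  rcases sq_mod_eight x with hx | hx | hx <;> rcases sq_mod_eight y with hy | hy | hy <;>
    rcases sq_mod_eight z with hz | hz | hz <;>
    first
    | (exfalso; omega)
    | exact key x y z (by omega) (by omega) (by omega) (by linarith)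
    | exact key x z y (by omega) (by omega) (by omega) (by linarith)
    | exact key y x z (by omega) (by omega) (by omega) (by linarith)
    | exact key y z x (by omega) (by omega) (by omega) (by linarith)
    | exact key z x y (by omega) (by omega) (by omega) (by linarith)
    | exact key z y x (by omega) (by omega) (by omega) (by linarith)

theorem sq_mod_five (x : ℤ) : x % 5 = 0 ∧ x ^ 2 % 5 = 0 ∨ (x % 5 = 1 ∨ x % 5 = 4) ∧ x ^ 2 % 5 = 1 ∨
    (x % 5 = 2 ∨ x % 5 = 3) ∧ x ^ 2 % 5 = 4 := by
  have h : x % 5 = 0 ∨ x % 5 = 1 ∨ x % 5 = 2 ∨ x % 5 = 3 ∨ x % 5 = 4 := by omega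
  have hs : x ^ 2 % 5 = x % 5 * (x % 5) % 5 := by rw [pow_two, Int.mul_emod]
  rcases h with h | h | h | h | h <;> rw [h] at hs <;> omega

/-- `5 (X² + Y² + 5 Z²) = (X + 2 Y)² + (2 X - Y)² + (5 Z)²`. In a representation of `40 n + 35` as
`a² + b² + c²` one term, say `c`, is divisible by `5`, and then `a ≡ ± 2 b` modulo `5`, which
allows the substitution to be inverted. Modulo `8`, the variables `X, Y, Z` must all be odd. -/
theorem liouville_115 (n : ℕ) : ∃ x y z : ℤ, 1 * T x + 1 * T y + 5 * T z = (n : ℤ) := by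
  obtain ⟨x, y, z, h⟩ := sum_three_sq (n := 40 * n + 35) (by omega)
  push_cast at h
  have key : ∀ a b c : ℤ, (a + 2 * b) % 5 = 0 → c % 5 = 0 →
      a ^ 2 + b ^ 2 + c ^ 2 = 40 * n + 35 →
      ∃ x y z : ℤ, 1 * T x + 1 * T y + 5 * T z = (n : ℤ) := by
    intro a b c hab hc h
    obtain ⟨u, v, rfl, rfl⟩ : ∃ u v, a = u + 2 * v ∧ b = 2 * u - v :=
      ⟨(a + 2 * b) / 5, (2 * a - b) / 5, by omega, by omega⟩
    obtain ⟨w, rfl⟩ : ∃ w, c = 5 * w := ⟨c / 5, by omega⟩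
    have h' : u ^ 2 + v ^ 2 + 5 * w ^ 2 = 8 * n + 7 := by linarith
    have hu := sq_mod_eight u
    have hv := sq_mod_eight v
    have hw := sq_mod_eight w
    exact exists_T_of_odd (X := u) (Y := v) (Z := w) (by omega) (by omega) (by omega)
      (by linear_combination h')
  have key' : ∀ a b c : ℤ, c % 5 = 0 → a ^ 2 + b ^ 2 + c ^ 2 = 40 * n + 35 →
      ∃ x y z : ℤ, 1 * T x + 1 * T y + 5 * T z = (n : ℤ) := by
    intro a b c hc h
    by_cases hab : (a + 2 * b) % 5 = 0
    · exact key a b c hab hc h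
    · refine key a (-b) c ?_ hc (by linear_combination h)
      have ha := sq_mod_five a
      have hb := sq_mod_five b
      have hc' := sq_mod_five c
      omega
  have hx := sq_mod_five x
  have hy := sq_mod_five y
  have hz := sq_mod_five z
  have : x % 5 = 0 ∨ y % 5 = 0 ∨ z % 5 = 0 := by omega
  rcases this with h0 | h0 | h0
  · exact key' y z x h0 (by linarith)
  · exact key' x z y h0 (by linarith)
  · exact key' x y z h0 (by linarith)

theorem exists_sq_eq_mod_three (x : ℤ) : ∃ y : ℤ, y ^ 2 = x ^ 2 ∧ (y % 3 = 0 ∧ x ^ 2 % 3 = 0 ∨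
    y % 3 = 1 ∧ x ^ 2 % 3 = 1) := by
  have h : x % 3 = 0 ∨ x % 3 = 1 ∨ x % 3 = 2 := by omega
  rcases h with h | h | h
  · exact ⟨x, rfl, Or.inl ⟨h, by simp [pow_two, Int.mul_emod, h]⟩⟩
  · exact ⟨x, rfl, Or.inr ⟨h, by simp [pow_two, Int.mul_emod, h]⟩⟩
  · exact ⟨-x, by ring, Or.inr ⟨by omega, by simp [pow_two, Int.mul_emod, h]⟩⟩

/-- The vectors `(1, 1, -2)`, `(1, 1, 1)`, `(1, -1, 0)` are orthogonal, whence
`6 (a² + b² + c²) = (a + b - 2 c)² + 2 (a + b + c)² + 3 (a - b)²`. For `a² + b² + c² = 12 n + 9` the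
signs can be chosen with `a ≡ b ≡ c` modulo `3`; dividing by `9` gives
`u² + 2 v² + 3 w² = 8 n + 6`. -/
theorem liouville_123 (n : ℕ) : ∃ x y z : ℤ, 1 * T x + 2 * T y + 3 * T z = (n : ℤ) := by
  obtain ⟨x, y, z, h⟩ := sum_three_sq (n := 12 * n + 9) (by omega)
  push_cast at h
  obtain ⟨a, ha, ha'⟩ := exists_sq_eq_mod_three x
  obtain ⟨b, hb, hb'⟩ := exists_sq_eq_mod_three y
  obtain ⟨c, hc, hc'⟩ := exists_sq_eq_mod_three z
  rw [← ha, ← hb, ← hc] at h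
  rw [← ha] at ha'
  rw [← hb] at hb'
  rw [← hc] at hc'
  obtain ⟨u, hu⟩ : ∃ u, a + b - 2 * c = 3 * u := ⟨(a + b - 2 * c) / 3, by omega⟩
  obtain ⟨v, hv⟩ : ∃ v, a + b + c = 3 * v := ⟨(a + b + c) / 3, by omega⟩
  obtain ⟨w, hw⟩ : ∃ w, a - b = 3 * w := ⟨(a - b) / 3, by omega⟩
  have h' : u ^ 2 + 2 * v ^ 2 + 3 * w ^ 2 = 8 * n + 6 := by
    have : 9 * (u ^ 2 + 2 * v ^ 2 + 3 * w ^ 2) =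
        (a + b - 2 * c) ^ 2 + 2 * (a + b + c) ^ 2 + 3 * (a - b) ^ 2 := by
      rw [hu, hv, hw]; ring
    linarith
  have hu8 := sq_mod_eight u
  have hv8 := sq_mod_eight v
  have hw8 := sq_mod_eight w
  by_cases hodd : u % 2 = 1
  · exact exists_T_of_odd (X := u) (Y := v) (Z := w) (by omega) (by omega) (by omega)
      (by linear_combination h')
  · obtain ⟨s, rfl⟩ : ∃ s, u = 2 * s := ⟨u / 2, by omega⟩
    obtain ⟨t, rfl⟩ : ∃ t, w = 2 * t := ⟨w / 2, by omega⟩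
    -- The identity `(2 s)² + 3 (2 t)² = (s + 3 t)² + 3 (s - t)²` restores odd variables.
    have := sq_mod_eight s
    have := sq_mod_eight t
    exact exists_T_of_odd (X := s + 3 * t) (Y := v) (Z := s - t) (by omega) (by omega) (by omega)
      (by linear_combination h')

theorem liouville_forward (a b c : ℤ)
    (h : (a, b, c) ∈ ({(1,1,1), (1,1,2), (1,1,4), (1,1,5), (1,2,2), (1,2,3), (1,2,4)} :
      Set (ℤ × ℤ × ℤ))) :
    ∀ n : ℕ, ∃ x y z : ℤ, a * T x + b * T y + c * T z = (n : ℤ) := by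
  intro n
  simp only [Set.mem_insert_iff, Set.mem_singleton_iff, Prod.mk.injEq] at h
  rcases h with ⟨rfl, rfl, rfl⟩ | ⟨rfl, rfl, rfl⟩ | ⟨rfl, rfl, rfl⟩ | ⟨rfl, rfl, rfl⟩ |
    ⟨rfl, rfl, rfl⟩ | ⟨rfl, rfl, rfl⟩ | ⟨rfl, rfl, rfl⟩
  · exact liouville_111 n
  · exact liouville_112 n
  · exact liouville_114 n
  · exact liouville_115 n
  · exact liouville_122 n
  · exact liouville_123 n
  · exact liouville_124 n
end

section
/- For every nonnegative integer n, the number of representations of n by T_x + T_y + 3T_z + 3T_w (over integer arguments) is at least (n+1)/3^{v₃(n+1)}, where v₃ denotes the 3-adic valuation. -/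
open Finset

/-! ### Odd representations by `x ^ 2 + 3 y ^ 2` -/

/-- The pairs of odd integers `(x, y)` with `x ^ 2 + 3 y ^ 2 = 4 N`. The box only makes the set a
`Finset`; it excludes no solution, see `mem_oddReps`. -/
noncomputable def oddReps (N : ℕ) : Finset (ℤ × ℤ) :=
  (Icc (-(4 * N : ℤ)) (4 * N) ×ˢ Icc (-(4 * N : ℤ)) (4 * N)).filter
    fun p => Odd p.1 ∧ Odd p.2 ∧ p.1 ^ 2 + 3 * p.2 ^ 2 = 4 * N

lemma mem_oddReps {N : ℕ} {p : ℤ × ℤ} :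
    p ∈ oddReps N ↔ Odd p.1 ∧ Odd p.2 ∧ p.1 ^ 2 + 3 * p.2 ^ 2 = 4 * N := by
  simp only [oddReps, mem_filter, mem_product, mem_Icc, and_iff_right_iff_imp]
  rintro ⟨-, -, h⟩
  refine ⟨⟨?_, ?_⟩, ?_, ?_⟩ <;>
  nlinarith [sq_nonneg (p.1 - 1), sq_nonneg (p.1 + 1), sq_nonneg (p.2 - 1), sq_nonneg (p.2 + 1),
    sq_nonneg p.1, sq_nonneg p.2]

/-- Multiplication by `a + b √-3` on `ℤ[√-3]`, with `x + y √-3` encoded as `(x, y)`. -/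
def mulBy (a b : ℤ) (p : ℤ × ℤ) : ℤ × ℤ := (a * p.1 - 3 * b * p.2, a * p.2 + b * p.1)

lemma mulBy_injective {a b : ℤ} (h : a ^ 2 + 3 * b ^ 2 ≠ 0) : Function.Injective (mulBy a b) := by
  rintro ⟨x, y⟩ ⟨x', y'⟩ e
  simp only [mulBy, Prod.mk.injEq] at e ⊢
  obtain ⟨e1, e2⟩ := e
  constructor
  · apply mul_left_cancel₀ h
    linear_combination a * e1 + 3 * b * e2
  · apply mul_left_cancel₀ h
    linear_combination a * e2 - b * e1

lemma mulBy_mem {a b : ℤ} {q N : ℕ} (hq : Odd q) (h : a ^ 2 + 3 * b ^ 2 = q) {p : ℤ × ℤ}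
    (hp : p ∈ oddReps N) : mulBy a b p ∈ oddReps (q * N) := by
  obtain ⟨x, y⟩ := p
  rw [mem_oddReps] at hp ⊢
  obtain ⟨hx, hy, e⟩ := hp
  have hq' : Odd (a ^ 2 + 3 * b ^ 2) := by rw [h]; exact_mod_cast hq
  simp only [mulBy] at *
  refine ⟨?_, ?_, ?_⟩
  · rw [← Int.not_even_iff_odd] at *
    simp only [parity_simps] at *
    have : ¬ Even (3:ℤ) := by decide
    tauto
  · rw [← Int.not_even_iff_odd] at *
    simp only [parity_simps] at *
    have : ¬ Even (3:ℤ) := by decide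
    tauto
  · push_cast
    rw [← h]
    linear_combination (a ^ 2 + 3 * b ^ 2) * e

lemma card_oddReps_le {a b : ℤ} {q : ℕ} (N : ℕ) (hq : Odd q) (h : a ^ 2 + 3 * b ^ 2 = q) :
    #(oddReps N) ≤ #(oddReps (q * N)) := by
  refine card_le_card_of_injOn (mulBy a b) (fun p hp => mulBy_mem hq h hp) ?_
  refine (mulBy_injective ?_).injOn
  rw [h]; exact_mod_cast hq.pos.ne'

/-- Let `π = a + b √-3` have prime norm `p ≡ 1 mod 3`. An element of norm `4 p N` divisible by both
`π` and its conjugate `π'` is divisible by `p`: `p` divides its multiple by `π + π' = 2 a`, and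
`p` is prime to `2 a`. -/
lemma exists_mul_of_two_factors {a b : ℤ} {p N : ℕ} (hp : p.Prime) (hp3 : p % 3 = 1) (hp2 : Odd p)
    (h : a ^ 2 + 3 * b ^ 2 = p) {q : ℤ × ℤ} (h1 : q ∈ (oddReps N).image (mulBy a b))
    (h2 : q ∈ (oddReps N).image (mulBy a (-b))) :
    ∃ N', N = p * N' ∧ q ∈ (oddReps N').image (mulBy p 0) := by
  obtain ⟨⟨x, y⟩, hxy, e1⟩ := mem_image.1 h1
  obtain ⟨⟨x', y'⟩, hxy', e2⟩ := mem_image.1 h2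
  have hq : q ∈ oddReps (p * N) := e1 ▸ mulBy_mem hp2 h hxy
  obtain ⟨u, v⟩ := q
  simp only [mulBy, Prod.mk.injEq] at e1 e2
  obtain ⟨e1, e1'⟩ := e1
  obtain ⟨e2, e2'⟩ := e2
  have hpZ : Prime (p : ℤ) := Nat.prime_iff_prime_int.1 hp
  have hpa : ¬ (p : ℤ) ∣ 2 * a := by
    intro hd
    rcases hpZ.dvd_or_dvd hd with hd | hd
    · have := Int.le_of_dvd (by norm_num) hd
      have := hp.two_le
      obtain rfl : p = 2 := by omega
      exact absurd hp2 (by decide)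
    · obtain ⟨c, rfl⟩ := hd
      have hc : c = 0 := by
        by_contra hc
        have : 0 < c ^ 2 := by positivity
        have : (2:ℤ) ≤ p := by exact_mod_cast hp.two_le
        have : (p : ℤ) ^ 2 ≤ p ^ 2 * c ^ 2 := le_mul_of_one_le_right (by positivity) (by omega)
        nlinarith [sq_nonneg b]
      subst hc
      have : (p : ℤ) % 3 = 1 := by exact_mod_cast hp3
      rw [← h] at this
      ring_nf at this
      omega
  have hu : (p : ℤ) ∣ u := by
    refine (hpZ.dvd_or_dvd (a := 2 * a) ⟨x + x', ?_⟩).resolve_left hpa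
    rw [← h]
    linear_combination (-3 * b) * e1' + (3 * b) * e2' - a * e1 - a * e2
  have hv : (p : ℤ) ∣ v := by
    refine (hpZ.dvd_or_dvd (a := 2 * a) ⟨y + y', ?_⟩).resolve_left hpa
    rw [← h]
    linear_combination b * e1 - b * e2 - a * e1' - a * e2'
  obtain ⟨s, rfl⟩ := hu
  obtain ⟨t, rfl⟩ := hv
  rw [mem_oddReps] at hq
  obtain ⟨ho1, ho2, e⟩ := hq
  simp only at ho1 ho2 e
  have hs := (Int.odd_mul.1 ho1).2
  have ht := (Int.odd_mul.1 ho2).2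
  have hp0 : (p : ℤ) ≠ 0 := hpZ.ne_zero
  have e' : (p : ℤ) * (s ^ 2 + 3 * t ^ 2) = 4 * N := by
    apply mul_left_cancel₀ hp0
    push_cast at e
    linear_combination e
  obtain ⟨k, hk⟩ : Even (s ^ 2 + 3 * t ^ 2) := by
    simp only [parity_simps, ← Int.not_even_iff_odd] at *
    tauto
  obtain ⟨i, hi⟩ := hs
  obtain ⟨j, hj⟩ := ht
  have h4 : s ^ 2 + 3 * t ^ 2 = 4 * (i ^ 2 + i + 3 * (j ^ 2 + j) + 1) := by
    subst hi hj; ring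
  have hnn : 0 ≤ i ^ 2 + i + 3 * (j ^ 2 + j) + 1 := by nlinarith [sq_nonneg s, sq_nonneg t]
  obtain ⟨N', hN'⟩ := Int.eq_ofNat_of_zero_le hnn
  refine ⟨N', ?_, mem_image.2 ⟨(s, t), ?_, by simp [mulBy]⟩⟩
  · rw [h4, hN'] at e'
    have : (p : ℤ) * N' = N := by linarith
    exact_mod_cast this.symm
  · exact mem_oddReps.2 ⟨⟨i, hi⟩, ⟨j, hj⟩, by rw [← hN']; exact h4⟩

/-- Inclusion-exclusion for the multiples of `π` and of its conjugate inside `oddReps (p * N)`. -/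
lemma card_images {a b : ℤ} {p : ℕ} (N : ℕ) (hp2 : Odd p)
    (h : a ^ 2 + 3 * b ^ 2 = p) :
    2 * #(oddReps N) ≤ #(oddReps (p * N)) +
      #((oddReps N).image (mulBy a b) ∩ (oddReps N).image (mulBy a (-b))) := by
  have hp0 : (p : ℤ) ≠ 0 := by exact_mod_cast hp2.pos.ne'
  have h' : a ^ 2 + 3 * (-b) ^ 2 = p := by rw [neg_sq, h]
  have c1 := card_image_of_injective (oddReps N) (mulBy_injective (h ▸ hp0 : a ^ 2 + 3 * b ^ 2 ≠ 0))
  have c2 := card_image_of_injective (oddReps N)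
    (mulBy_injective (h' ▸ hp0 : a ^ 2 + 3 * (-b) ^ 2 ≠ 0))
  have hu := card_union_add_card_inter ((oddReps N).image (mulBy a b))
    ((oddReps N).image (mulBy a (-b)))
  have hs : (oddReps N).image (mulBy a b) ∪ (oddReps N).image (mulBy a (-b)) ⊆
      oddReps (p * N) := by
    apply union_subset <;> rw [image_subset_iff]
    · exact fun q hq => mulBy_mem hp2 h hq
    · exact fun q hq => mulBy_mem hp2 h' hq
  have := card_le_card hs
  omega

/-- For a prime `p ≡ 1 mod 3` the numbers `g k = #(oddReps (p ^ k * N))` have nondecreasing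
differences by `card_images` and `exists_mul_of_two_factors`, and `g 1 - g 0 ≥ g 0` if `p ∤ N`. -/
lemma card_oddReps_split {p : ℕ} (hp : p.Prime) (hp3 : p % 3 = 1) {a b : ℤ}
    (h : a ^ 2 + 3 * b ^ 2 = p) {N : ℕ} (hN : ¬ p ∣ N) (k : ℕ) :
    (k + 1) * #(oddReps N) ≤ #(oddReps (p ^ k * N)) := by
  have hp2 : Odd p := hp.odd_of_ne_two (by rintro rfl; omega)
  have key : ∀ k, #(oddReps (p ^ k * N)) + #(oddReps N) ≤ #(oddReps (p ^ (k + 1) * N)) := by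
    intro k
    induction k with
    | zero =>
      have := card_images N hp2 h
      rw [(card_eq_zero (s := (oddReps N).image (mulBy a b) ∩ _)).2, add_zero] at this
      · simp only [pow_zero, one_mul, zero_add, pow_one]; omega
      · rw [eq_empty_iff_forall_notMem]
        intro q hq
        rw [mem_inter] at hq
        obtain ⟨N', h', -⟩ := exists_mul_of_two_factors hp hp3 hp2 h hq.1 hq.2
        exact hN ⟨N', h'⟩
    | succ k ih =>
      have := card_images (p ^ (k + 1) * N) hp2 h
      have hle : #((oddReps (p ^ (k + 1) * N)).image (mulBy a b) ∩
          (oddReps (p ^ (k + 1) * N)).image (mulBy a (-b))) ≤ #(oddReps (p ^ k * N)) := by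
        refine le_trans (card_le_card (fun q hq => ?_)) (card_image_le (f := mulBy p 0))
        rw [mem_inter] at hq
        obtain ⟨N', h', hm⟩ := exists_mul_of_two_factors hp hp3 hp2 h hq.1 hq.2
        have : N' = p ^ k * N := by
          apply Nat.eq_of_mul_eq_mul_left hp.pos
          rw [← h']; ring
        rwa [this] at hm
      rw [show p ^ (k + 1 + 1) * N = p * (p ^ (k + 1) * N) by ring]
      omega
  induction k with
  | zero => simp
  | succ k ih => have := key k; linarith

/-- Primes `p ≡ 1 mod 3` are of the form `a ^ 2 + 3 b ^ 2`, by Thue's argument. -/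
lemma exists_sq_add_three_sq {p : ℕ} (hp : p.Prime) (hp3 : p % 3 = 1) :
    ∃ a b : ℤ, a ^ 2 + 3 * b ^ 2 = p := by
  have := Fact.mk hp
  -- a square root `w` of `-3`, built from an element of order `3` in the unit group
  obtain ⟨w, hw⟩ : ∃ w : ZMod p, w ^ 2 = -3 := by
    have := Fact.mk Nat.prime_three
    obtain ⟨u, hu⟩ := exists_prime_orderOf_dvd_card (G := (ZMod p)ˣ) 3 (by
      rw [ZMod.card_units]; omega)
    have h3 : (u : ZMod p) ^ 3 = 1 := by
      have := pow_orderOf_eq_one u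
      rw [hu] at this
      rw [← Units.val_pow_eq_pow_val, this, Units.val_one]
    have h1 : (u : ZMod p) - 1 ≠ 0 := by
      intro h
      have : u = 1 := Units.ext (sub_eq_zero.1 h)
      rw [this, orderOf_one] at hu
      omega
    have h0 : (u : ZMod p) ^ 2 + u + 1 = 0 := by
      apply mul_left_cancel₀ h1
      linear_combination h3
    exact ⟨2 * u + 1, by linear_combination 4 * h0⟩
  -- Pigeonhole gives `A ≡ w B mod p` with `|A|, |B| < √p`, not both zero.
  set s := Nat.sqrt p with hs
  have hs1 : p < (s + 1) * (s + 1) := Nat.lt_succ_sqrt p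
  have hs2 : s * s < p := by
    refine lt_of_le_of_ne (Nat.sqrt_le p) fun h => ?_
    exact (Nat.prime_mul_iff.1 (h ▸ hp)).elim (fun h' => by have := h'.1.two_le; omega)
      (fun h' => by have := h'.1.two_le; omega)
  obtain ⟨⟨x, y⟩, hx, ⟨x', y'⟩, hx', hne, he⟩ :=
    exists_ne_map_eq_of_card_lt_of_maps_to (s := range (s + 1) ×ˢ range (s + 1))
      (t := (univ : Finset (ZMod p))) (f := fun q => (q.1 : ZMod p) - w * q.2)
      (by rw [card_univ, ZMod.card, card_product, card_range]; exact hs1)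
      (fun _ _ => mem_coe.2 (mem_univ _))
  simp only [mem_product, mem_range] at hx hx' he
  obtain ⟨A, hA⟩ : ∃ A : ℤ, A = (x : ℤ) - x' := ⟨_, rfl⟩
  obtain ⟨B, hB⟩ : ∃ B : ℤ, B = (y : ℤ) - y' := ⟨_, rfl⟩
  have hdvd : (p : ℤ) ∣ A ^ 2 + 3 * B ^ 2 := by
    rw [← ZMod.intCast_zmod_eq_zero_iff_dvd _ p] 
    subst hA hB
    push_cast
    linear_combination ((x : ZMod p) - x' + w * (y - y')) * he + ((y : ZMod p) - y') ^ 2 * hw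
  have hA2 : A ^ 2 < p := by
    have : A ^ 2 ≤ (s : ℤ) ^ 2 := by
      apply sq_le_sq' <;> omega
    have h2 : (s : ℤ) * s < p := by exact_mod_cast hs2
    nlinarith
  have hB2 : B ^ 2 < p := by
    have : B ^ 2 ≤ (s : ℤ) ^ 2 := by
      apply sq_le_sq' <;> omega
    have h2 : (s : ℤ) * s < p := by exact_mod_cast hs2
    nlinarith
  have hpos : 0 < A ^ 2 + 3 * B ^ 2 := by
    by_cases hA0 : A = 0
    · have hB0 : B ≠ 0 := by
        rintro hB0
        apply hne
        ext <;> simp only <;> omega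
      positivity
    · positivity
  -- `A ^ 2 + 3 B ^ 2 = c p` with `c ∈ {1, 2, 3}`; `c = 2` fails mod `4`, and `c = 3` descends.
  obtain ⟨c, hc⟩ := hdvd
  have hp0 : (0 : ℤ) < p := by exact_mod_cast hp.pos
  have hc0 : 0 < c := by
    by_contra h
    nlinarith
  have hc4 : c < 4 := by
    by_contra h
    nlinarith
  have hp3' : (p : ℤ) % 3 = 1 := by exact_mod_cast hp3
  interval_cases c
  · exact ⟨A, B, by linarith⟩
  · exfalso
    have hp2 : Odd p := hp.odd_of_ne_two (by rintro rfl; omega)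
    obtain ⟨k, hk⟩ := hp2
    have hk' : (p : ℤ) = 2 * k + 1 := by exact_mod_cast hk
    rcases Int.even_or_odd' A with ⟨i, hi | hi⟩ <;> rcases Int.even_or_odd' B with ⟨j, hj | hj⟩ <;>
      subst hi <;> rw [hj, hk'] at hc <;> ring_nf at hc <;> omega
  · have : (3 : ℤ) ∣ A := by
      apply Int.prime_three.dvd_of_dvd_pow (n := 2)
      exact ⟨p - B ^ 2, by linarith⟩
    obtain ⟨i, rfl⟩ := this
    exact ⟨B, i, by nlinarith⟩

/-! ### The divisor sum of the character modulo 3 -/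

/-- The nontrivial Dirichlet character modulo `3`. -/
def chi (a : ℕ) : ℤ := if a % 3 = 1 then 1 else if a % 3 = 2 then -1 else 0

lemma chi_mul (a b : ℕ) : chi (a * b) = chi a * chi b := by
  have ha := Nat.mod_lt a (show 3 > 0 by norm_num)
  have hb := Nat.mod_lt b (show 3 > 0 by norm_num)
  simp only [chi, Nat.mul_mod a b]
  generalize a % 3 = i at *
  generalize b % 3 = j at *
  interval_cases i <;> interval_cases j <;> rfl

lemma chi_pow (a k : ℕ) : chi (a ^ k) = chi a ^ k := by
  induction k with
  | zero => simp [chi]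
  | succ k ih => rw [pow_succ, chi_mul, ih, pow_succ]

/-- The divisor sum `∑_{d ∣ N} χ(d)`; it vanishes at `N = 0`, where there are no divisors. -/
def chiSum (N : ℕ) : ℤ := ∑ d ∈ N.divisors, chi d

lemma chiSum_mul {m n : ℕ} (h : m.Coprime n) : chiSum (m * n) = chiSum m * chiSum n := by
  let F : ArithmeticFunction ℤ := ⟨chi, rfl⟩
  have hF : F.IsMultiplicative := ⟨rfl, fun _ => chi_mul _ _⟩
  have hc : ∀ N, chiSum N = (F * (ArithmeticFunction.zeta : ArithmeticFunction ℤ)) N := fun N => by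
    rw [ArithmeticFunction.coe_mul_zeta_apply]; rfl
  rw [hc, hc, hc]
  exact (hF.mul ArithmeticFunction.isMultiplicative_zeta.natCast).map_mul_of_coprime h

lemma chiSum_prime_pow {p : ℕ} (hp : p.Prime) (k : ℕ) :
    chiSum (p ^ k) = ∑ i ∈ range (k + 1), chi p ^ i := by
  rw [chiSum, Nat.sum_divisors_prime_pow hp]
  simp only [chi_pow]

/-- One prime at a time: passing from `N'` to `p ^ k * N'` with `p ∤ N'` multiplies `chiSum` by
`1`, `k + 1`, or the indicator of even `k`, for `p ≡ 0, 1, 2 mod 3`, while the number of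
representations grows by at least the same factor. -/
lemma chiSum_bounds {N : ℕ} (hN : Odd N) : 0 ≤ chiSum N ∧ chiSum N ≤ #(oddReps N) := by
  induction N using Nat.strong_induction_on with
  | _ N ih =>
  by_cases h1 : N = 1
  · subst h1
    have : 0 < #(oddReps 1) :=
      card_pos.2 ⟨(1, 1), mem_oddReps.2 ⟨odd_one, odd_one, by norm_num⟩⟩
    have h : chiSum 1 = 1 := by simp [chiSum, chi]
    rw [h]; omega
  obtain ⟨p, hp, hpN⟩ := Nat.exists_prime_and_dvd h1
  obtain ⟨k, N', hpN', rfl⟩ := Nat.exists_eq_pow_mul_and_not_dvd hN.pos.ne' p hp.ne_one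
  have hk : k ≠ 0 := by rintro rfl; simp at hpN; exact hpN' hpN
  have hN' : Odd N' := (Nat.odd_mul.1 hN).2
  obtain ⟨ih0, ih1⟩ := ih N' (by
    have := Nat.one_lt_pow hk hp.one_lt
    have := hN'.pos
    nlinarith) hN'
  rw [chiSum_mul (Nat.Coprime.pow_left k ((Nat.Prime.coprime_iff_not_dvd hp).2 hpN')),
    chiSum_prime_pow hp]
  have h3 : p % 3 = 0 ∨ p % 3 = 1 ∨ p % 3 = 2 := by omega
  rcases h3 with hr | hr | hr
  · obtain rfl : 3 = p :=
      (Nat.prime_dvd_prime_iff_eq Nat.prime_three hp).1 (Nat.dvd_of_mod_eq_zero hr)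
    have hle : ∀ j, #(oddReps N') ≤ #(oddReps (3 ^ j * N')) := by
      intro j
      induction j with
      | zero => simp
      | succ j ihj =>
        rw [pow_succ', mul_assoc]
        exact ihj.trans (card_oddReps_le (a := 0) (b := 1) _ (by decide) (by norm_num))
    have hc : chi 3 = 0 := rfl
    have := hle k
    simp only [hc, sum_range_succ', pow_succ, mul_zero, sum_const_zero, pow_zero, zero_add, one_mul]
    omega
  · obtain ⟨a, b, hab⟩ := exists_sq_add_three_sq hp hr
    have hle := card_oddReps_split hp hr hab hpN' k
    have hc : chi p = 1 := by simp [chi, hr]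
    simp only [hc, one_pow, sum_const, card_range, nsmul_eq_mul, mul_one]
    refine ⟨by positivity, ?_⟩
    calc ((k + 1 : ℕ) : ℤ) * chiSum N' ≤ ((k + 1 : ℕ) : ℤ) * #(oddReps N') := by gcongr
      _ ≤ _ := by exact_mod_cast hle
  · have hc : chi p = -1 := by simp [chi, hr]
    rw [hc, neg_one_geom_sum]
    split_ifs with hev
    · simp
    · obtain ⟨j, rfl⟩ : Even k := by
        simpa [parity_simps] using hev
      have hle := card_oddReps_le (a := p ^ j) (b := 0) (q := p ^ (j + j)) N'
        (Nat.odd_mul.1 hN).1 (by push_cast; ring)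
      omega

/-! ### Liouville's identity for odd variables -/

/-- The quadruples `(a, x, b, y)` of odd naturals with `a x + b y = 2 m`. -/
def quads (m : ℕ) : Finset (ℕ × ℕ × ℕ × ℕ) :=
  (range (2 * m + 1) ×ˢ range (2 * m + 1) ×ˢ range (2 * m + 1) ×ˢ range (2 * m + 1)).filter
    fun q => Odd q.1 ∧ Odd q.2.1 ∧ Odd q.2.2.1 ∧ Odd q.2.2.2 ∧
      q.1 * q.2.1 + q.2.2.1 * q.2.2.2 = 2 * m

lemma mem_quads {m a x b y : ℕ} : (a, x, b, y) ∈ quads m ↔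
    Odd a ∧ Odd x ∧ Odd b ∧ Odd y ∧ a * x + b * y = 2 * m := by
  simp only [quads, mem_filter, mem_product, mem_range, and_iff_right_iff_imp]
  rintro ⟨ha, hx, hb, hy, h⟩
  have := ha.pos
  have := hx.pos
  have := hb.pos
  have := hy.pos
  refine ⟨?_, ?_, ?_, ?_⟩ <;> nlinarith

/-- The quadruples `(e, x, b, z)` of positive naturals with `e, z` even, `x, b` odd and
`e x + b z = 2 m`. -/
def mixedQuads (m : ℕ) : Finset (ℕ × ℕ × ℕ × ℕ) :=
  (range (2 * m + 1) ×ˢ range (2 * m + 1) ×ˢ range (2 * m + 1) ×ˢ range (2 * m + 1)).filter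
    fun q => (Even q.1 ∧ 0 < q.1) ∧ Odd q.2.1 ∧ Odd q.2.2.1 ∧ (Even q.2.2.2 ∧ 0 < q.2.2.2) ∧
      q.1 * q.2.1 + q.2.2.1 * q.2.2.2 = 2 * m

lemma mem_mixedQuads {m e x b z : ℕ} : (e, x, b, z) ∈ mixedQuads m ↔
    (Even e ∧ 0 < e) ∧ Odd x ∧ Odd b ∧ (Even z ∧ 0 < z) ∧ e * x + b * z = 2 * m := by
  simp only [mixedQuads, mem_filter, mem_product, mem_range, and_iff_right_iff_imp]
  rintro ⟨⟨-, he⟩, hx, hb, ⟨-, hz⟩, h⟩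
  have := hx.pos
  have := hb.pos
  refine ⟨?_, ?_, ?_, ?_⟩ <;> nlinarith

/-- For `a > b`, write `a x + b y = (a - b) x + b (x + y)`. -/
lemma sum_gt_eq (g : ℕ → ℤ) (m : ℕ) :
    ∑ q ∈ quads m with q.2.2.1 < q.1, g (q.1 - q.2.2.1) =
      ∑ q ∈ mixedQuads m with q.2.1 < q.2.2.2, g q.1 := by
  refine sum_nbij' (fun q => (q.1 - q.2.2.1, q.2.1, q.2.2.1, q.2.1 + q.2.2.2))
    (fun q => (q.1 + q.2.2.1, q.2.1, q.2.2.1, q.2.2.2 - q.2.1)) ?_ ?_ ?_ ?_ ?_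
  · rintro ⟨a, x, b, y⟩ hq
    simp only [mem_filter, mem_quads, mem_mixedQuads] at hq ⊢
    obtain ⟨⟨ha, hx, hb, hy, h⟩, hlt⟩ := hq
    obtain ⟨e, rfl⟩ := Nat.exists_eq_add_of_lt hlt
    have hz := hx.pos
    have hy' := hy.pos
    refine ⟨⟨⟨?_, by omega⟩, hx, hb, ⟨hx.add_odd hy, by omega⟩, ?_⟩, by omega⟩
    · exact Nat.Odd.sub_odd ha hb
    · rw [← h, show b + e + 1 - b = e + 1 by omega]; ring
  · rintro ⟨e, x, b, z⟩ hq
    simp only [mem_filter, mem_quads, mem_mixedQuads] at hq ⊢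
    obtain ⟨⟨⟨he, he0⟩, hx, hb, ⟨hz, hz0⟩, h⟩, hlt⟩ := hq
    obtain ⟨y, rfl⟩ := Nat.exists_eq_add_of_lt hlt
    refine ⟨⟨he.add_odd hb, hx, hb, ?_, ?_⟩, by omega⟩
    · exact Nat.Even.sub_odd hlt.le hz hx
    · rw [← h, show x + y + 1 - x = y + 1 by omega]; ring
  · rintro ⟨a, x, b, y⟩ hq
    have hlt := (mem_filter.1 hq).2
    refine Prod.ext ?_ (Prod.ext ?_ (Prod.ext ?_ ?_)) <;> dsimp only at hlt ⊢ <;> omega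
  · rintro ⟨a, x, b, y⟩ hq
    have hlt := (mem_filter.1 hq).2
    refine Prod.ext ?_ (Prod.ext ?_ (Prod.ext ?_ ?_)) <;> dsimp only at hlt ⊢ <;> omega
  · rintro ⟨a, x, b, y⟩ hq
    rfl

/-- For `x > y`, write `a x + b y = (a + b) y + a (x - y)`. -/
lemma sum_lt_eq (g : ℕ → ℤ) (m : ℕ) :
    ∑ q ∈ quads m with q.2.2.2 < q.2.1, g (q.1 + q.2.2.1) =
      ∑ q ∈ mixedQuads m with q.2.2.1 < q.1, g q.1 := by
  refine sum_nbij' (fun q => (q.1 + q.2.2.1, q.2.2.2, q.1, q.2.1 - q.2.2.2))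
    (fun q => (q.2.2.1, q.2.1 + q.2.2.2, q.1 - q.2.2.1, q.2.1)) ?_ ?_ ?_ ?_ ?_
  · rintro ⟨a, x, b, y⟩ hq
    simp only [mem_filter, mem_quads, mem_mixedQuads] at hq ⊢
    obtain ⟨⟨ha, hx, hb, hy, h⟩, hlt⟩ := hq
    obtain ⟨e, rfl⟩ := Nat.exists_eq_add_of_lt hlt
    have ha' := ha.pos
    have hb' := hb.pos
    refine ⟨⟨⟨ha.add_odd hb, by omega⟩, hy, ha, ⟨?_, by omega⟩, ?_⟩, by omega⟩
    · exact Nat.Odd.sub_odd hx hy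
    · rw [← h, show y + e + 1 - y = e + 1 by omega]; ring
  · rintro ⟨e, x, b, z⟩ hq
    simp only [mem_filter, mem_quads, mem_mixedQuads] at hq ⊢
    obtain ⟨⟨⟨he, he0⟩, hx, hb, ⟨hz, hz0⟩, h⟩, hlt⟩ := hq
    obtain ⟨y, rfl⟩ := Nat.exists_eq_add_of_lt hlt
    refine ⟨⟨hb, hx.add_even hz, ?_, hx, ?_⟩, by omega⟩
    · exact Nat.Even.sub_odd hlt.le he hb
    · rw [← h, show b + y + 1 - b = y + 1 by omega]; ring
  · rintro ⟨a, x, b, y⟩ hq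
    have hlt := (mem_filter.1 hq).2
    refine Prod.ext ?_ (Prod.ext ?_ (Prod.ext ?_ ?_)) <;> dsimp only at hlt ⊢ <;> omega
  · rintro ⟨a, x, b, y⟩ hq
    have hlt := (mem_filter.1 hq).2
    refine Prod.ext ?_ (Prod.ext ?_ (Prod.ext ?_ ?_)) <;> dsimp only at hlt ⊢ <;> omega
  · rintro ⟨a, x, b, y⟩ hq
    rfl

/-- For fixed even `e, z`, write `b = b₀ + k e` and `x = x₀ + l z` with remainders `b₀, x₀`.
Then `e x + b z = e x₀ + b₀ z + (k + l) e z` is symmetric in `k` and `l`, and exchanging them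
carries `x < z` (that is, `l = 0`) to `b < e` (that is, `k = 0`). -/
lemma sum_mixedQuads_swap (g : ℕ → ℤ) (m : ℕ) :
    ∑ q ∈ mixedQuads m with q.2.1 < q.2.2.2, g q.1 =
      ∑ q ∈ mixedQuads m with q.2.2.1 < q.1, g q.1 := by
  refine sum_nbij'
    (fun q => (q.1, q.2.1 + q.2.2.2 * (q.2.2.1 / q.1), q.2.2.1 % q.1, q.2.2.2))
    (fun q => (q.1, q.2.1 % q.2.2.2, q.2.2.1 + q.1 * (q.2.1 / q.2.2.2), q.2.2.2)) ?_ ?_ ?_ ?_ ?_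
  · rintro ⟨e, x, b, z⟩ hq
    simp only [mem_filter, mem_mixedQuads] at hq ⊢
    obtain ⟨⟨⟨he, he0⟩, hx, hb, ⟨hz, hz0⟩, h⟩, hlt⟩ := hq
    refine ⟨⟨⟨he, he0⟩, hx.add_even (hz.mul_right _), ?_, ⟨hz, hz0⟩, ?_⟩, Nat.mod_lt _ he0⟩
    · have := Nat.mod_add_div b e
      rw [← this, Nat.odd_add] at hb
      exact hb.2 (he.mul_right _)
    · rw [← h]
      nth_rw 3 [← Nat.mod_add_div b e]
      ring
  · rintro ⟨e, x, b, z⟩ hq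
    simp only [mem_filter, mem_mixedQuads] at hq ⊢
    obtain ⟨⟨⟨he, he0⟩, hx, hb, ⟨hz, hz0⟩, h⟩, hlt⟩ := hq
    refine ⟨⟨⟨he, he0⟩, ?_, hb.add_even (he.mul_right _), ⟨hz, hz0⟩, ?_⟩, Nat.mod_lt _ hz0⟩
    · have := Nat.mod_add_div x z
      rw [← this, Nat.odd_add] at hx
      exact hx.2 (hz.mul_right _)
    · rw [← h]
      nth_rw 3 [← Nat.mod_add_div x z]
      ring
  · rintro ⟨e, x, b, z⟩ hq
    simp only [mem_filter, mem_mixedQuads] at hq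
    obtain ⟨⟨⟨he, he0⟩, hx, hb, ⟨hz, hz0⟩, h⟩, hlt⟩ := hq
    simp only [Prod.mk.injEq, true_and, and_true]
    rw [Nat.add_mul_mod_self_left, Nat.mod_eq_of_lt hlt, Nat.add_mul_div_left _ _ hz0,
      Nat.div_eq_of_lt hlt, zero_add, Nat.mod_add_div]
    exact ⟨rfl, rfl⟩
  · rintro ⟨e, x, b, z⟩ hq
    simp only [mem_filter, mem_mixedQuads] at hq
    obtain ⟨⟨⟨he, he0⟩, hx, hb, ⟨hz, hz0⟩, h⟩, hlt⟩ := hq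
    simp only [Prod.mk.injEq, true_and, and_true]
    rw [Nat.add_mul_mod_self_left, Nat.mod_eq_of_lt hlt, Nat.add_mul_div_left _ _ he0,
      Nat.div_eq_of_lt hlt, zero_add, Nat.mod_add_div]
    exact ⟨rfl, rfl⟩
  · rintro ⟨a, x, b, y⟩ hq
    rfl

lemma sum_trichotomy {α : Type*} (s : Finset α) (u v : α → ℕ) (f : α → ℤ) :
    ∑ q ∈ s, f q = ∑ q ∈ s with u q = v q, f q + ∑ q ∈ s with v q < u q, f q +
      ∑ q ∈ s with u q < v q, f q := by
  simp only [sum_filter, ← sum_add_distrib]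
  refine sum_congr rfl fun q _ => ?_
  rcases lt_trichotomy (u q) (v q) with h | h | h
  · simp [h, h.ne, h.not_gt]
  · simp [h]
  · simp [h, h.ne', h.not_gt]

/-- Liouville's identity
`∑ (g |a - b| - g (a + b)) = ∑_{a = b} (g 0 - g (x + y))` over odd solutions of `a x + b y = 2 m`.
With truncated subtraction, `|a - b|` is `a - b + (b - a)`. -/
lemma liouville (g : ℕ → ℤ) (m : ℕ) :
    ∑ q ∈ quads m, (g (q.1 - q.2.2.1 + (q.2.2.1 - q.1)) - g (q.1 + q.2.2.1)) =
      ∑ q ∈ quads m with q.1 = q.2.2.1, (g 0 - g (q.2.1 + q.2.2.2)) := by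
  -- exchanging the two products, `(a, x, b, y) ↦ (b, y, a, x)`
  have hswap : ∀ (P : ℕ × ℕ × ℕ × ℕ → Prop) [DecidablePred P] (Q : ℕ × ℕ × ℕ × ℕ → Prop)
      [DecidablePred Q] (f f' : ℕ × ℕ × ℕ × ℕ → ℤ)
      (_ : ∀ a x b y, P (a, x, b, y) ↔ Q (b, y, a, x))
      (_ : ∀ a x b y, P (a, x, b, y) → f (a, x, b, y) = f' (b, y, a, x)),
      ∑ q ∈ quads m with P q, f q = ∑ q ∈ quads m with Q q, f' q := by
    intro P _ Q _ f f' hPQ hf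
    refine sum_nbij' (fun q => (q.2.2.1, q.2.2.2, q.1, q.2.1))
      (fun q => (q.2.2.1, q.2.2.2, q.1, q.2.1)) ?_ ?_ (fun _ _ => rfl) (fun _ _ => rfl) ?_
    · rintro ⟨a, x, b, y⟩ hq
      simp only [mem_filter, mem_quads] at hq ⊢
      rw [← hPQ, add_comm (b * y)]
      tauto
    · rintro ⟨a, x, b, y⟩ hq
      simp only [mem_filter, mem_quads] at hq ⊢
      rw [hPQ, add_comm (b * y)]
      tauto
    · rintro ⟨a, x, b, y⟩ hq
      exact hf _ _ _ _ (mem_filter.1 hq).2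
  -- exchanging the factors within each product, `(a, x, b, y) ↦ (x, a, y, b)`
  have hdual : ∑ q ∈ quads m with q.2.1 = q.2.2.2, g (q.1 + q.2.2.1) =
      ∑ q ∈ quads m with q.1 = q.2.2.1, g (q.2.1 + q.2.2.2) := by
    refine sum_nbij' (fun q => (q.2.1, q.1, q.2.2.2, q.2.2.1))
      (fun q => (q.2.1, q.1, q.2.2.2, q.2.2.1)) ?_ ?_ (fun _ _ => rfl) (fun _ _ => rfl)
      (fun _ _ => rfl) <;>
    · rintro ⟨a, x, b, y⟩ hq
      simp only [mem_filter, mem_quads] at hq ⊢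
      rw [mul_comm x, mul_comm y]
      tauto
  rw [sum_sub_distrib, sum_sub_distrib,
    sum_trichotomy _ (fun q => q.1) (fun q => q.2.2.1),
    sum_trichotomy (quads m) (fun q => q.2.1) (fun q => q.2.2.2) (fun q => g (q.1 + q.2.2.1)),
    hdual,
    hswap (fun q => q.1 < q.2.2.1) (fun q => q.2.2.1 < q.1) _ (fun q => g (q.1 - q.2.2.1))
      (fun _ _ _ _ => Iff.rfl) (fun a x b y h => by simp only at h ⊢; congr 1; omega),
    hswap (fun q => q.2.1 < q.2.2.2) (fun q => q.2.2.2 < q.2.1) _ (fun q => g (q.1 + q.2.2.1))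
      (fun _ _ _ _ => Iff.rfl) (fun a x b y h => by simp only [add_comm]),
    sum_lt_eq, ← sum_mixedQuads_swap, ← sum_gt_eq]
  have h0 : ∑ q ∈ quads m with q.1 = q.2.2.1, g (q.1 - q.2.2.1 + (q.2.2.1 - q.1)) =
      ∑ q ∈ quads m with q.1 = q.2.2.1, g 0 :=
    sum_congr rfl fun q hq => by rw [(mem_filter.1 hq).2]; simp
  have h1 : ∑ q ∈ quads m with q.2.2.1 < q.1, g (q.1 - q.2.2.1 + (q.2.2.1 - q.1)) =
      ∑ q ∈ quads m with q.2.2.1 < q.1, g (q.1 - q.2.2.1) :=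
    sum_congr rfl fun q hq => by
      have := (mem_filter.1 hq).2
      congr 1; omega
  rw [h0, h1]
  ring

/-- The product `χ(a) χ(b)` has the shape required by `liouville`, with `g` the indicator of the
multiples of `3`. -/
lemma chi_mul_eq (a b : ℕ) : chi a * chi b =
    (if 3 ∣ a - b + (b - a) then 1 else 0) - (if 3 ∣ a + b then 1 else 0) := by
  have h1 : 3 ∣ a - b + (b - a) ↔ a % 3 = b % 3 := by omega
  have h2 : 3 ∣ a + b ↔ (a % 3 + b % 3) % 3 = 0 := by omega
  simp only [chi, h1, h2]
  have ha := Nat.mod_lt a (show 3 > 0 by norm_num)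
  have hb := Nat.mod_lt b (show 3 > 0 by norm_num)
  generalize a % 3 = i at *
  generalize b % 3 = j at *
  interval_cases i <;> interval_cases j <;> rfl

/-- By `liouville` the sum counts the odd solutions with `a = b` and `3 ∤ x + y`. Taking
`a = b = 3 ^ v₃(m)` leaves `x + y = 2 m'` with `m' = m / 3 ^ v₃(m)`, which has `m'` odd solutions. -/
lemma le_sum_chi_mul_chi {m : ℕ} (hm : m ≠ 0) :
    ((m / 3 ^ m.factorization 3 : ℕ) : ℤ) ≤ ∑ q ∈ quads m, chi q.1 * chi q.2.2.1 := by
  simp only [chi_mul_eq]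
  rw [liouville (fun k => if 3 ∣ k then 1 else 0)]
  set t := 3 ^ m.factorization 3
  set m' := m / t
  have hm' : t * m' = m := Nat.ordProj_mul_ordCompl_eq_self m 3
  have h3 : ¬ 3 ∣ m' := Nat.not_dvd_ordCompl Nat.prime_three hm
  have ht : Odd t := Odd.pow (by decide)
  have hnn : ∀ q ∈ quads m, (0 : ℤ) ≤ (if 3 ∣ 0 then 1 else 0) - 
      (if 3 ∣ q.2.1 + q.2.2.2 then 1 else 0) := by
    intro q _
    split_ifs <;> simp_all
  let φ : ℕ → ℕ × ℕ × ℕ × ℕ := fun i => (t, 2 * i + 1, t, 2 * (m' - 1 - i) + 1)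
  have hφ : Set.InjOn φ (range m') := by
    intro i _ j _ h
    simp only [φ, Prod.mk.injEq] at h
    omega
  calc (m' : ℤ) = ∑ q ∈ (range m').image φ, 1 := by
        rw [sum_const, card_image_of_injOn hφ, card_range]; simp
    _ = ∑ q ∈ (range m').image φ, ((if 3 ∣ 0 then 1 else 0) -
          (if 3 ∣ q.2.1 + q.2.2.2 then 1 else 0)) := by
        refine sum_congr rfl fun q hq => ?_
        obtain ⟨i, hi, rfl⟩ := mem_image.1 hq
        rw [mem_range] at hi
        rw [if_pos (dvd_zero 3), if_neg, sub_zero]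
        simp only [φ]
        omega
    _ ≤ _ := by
        refine sum_le_sum_of_subset_of_nonneg ?_ fun q hq _ => hnn q (mem_filter.1 hq).1
        intro q hq
        obtain ⟨i, hi, rfl⟩ := mem_image.1 hq
        rw [mem_range] at hi
        refine mem_filter.2 ⟨mem_quads.2 ⟨ht, ⟨i, rfl⟩, ht, ⟨_, rfl⟩, ?_⟩, rfl⟩
        rw [← mul_add, show 2 * i + 1 + (2 * (m' - 1 - i) + 1) = 2 * m' by omega, ← hm']
        ring

/-! ### Counting representations by the quaternary form -/

lemma sum_antidiagonal_chiSum (n : ℕ) :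
    ∑ ij ∈ antidiagonal n, chiSum (2 * ij.1 + 1) * chiSum (2 * ij.2 + 1) =
      ∑ q ∈ quads (n + 1), chi q.1 * chi q.2.2.1 := by
  simp only [chiSum, ← Nat.sum_divisorsAntidiagonal (fun d _ => chi d), sum_mul_sum, ← sum_product']
  rw [← sum_sigma (antidiagonal n)
    (fun ij => (2 * ij.1 + 1).divisorsAntidiagonal ×ˢ (2 * ij.2 + 1).divisorsAntidiagonal)
    (fun s => chi s.2.1.1 * chi s.2.2.1)]
  refine sum_nbij' (fun s => (s.2.1.1, s.2.1.2, s.2.2.1, s.2.2.2))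
    (fun q => ⟨(q.1 * q.2.1 / 2, q.2.2.1 * q.2.2.2 / 2), ((q.1, q.2.1), (q.2.2.1, q.2.2.2))⟩)
    ?_ ?_ ?_ (fun _ _ => rfl) (fun _ _ => rfl)
  · rintro ⟨⟨i, j⟩, ⟨⟨a, x⟩, ⟨b, y⟩⟩⟩ h
    simp only [mem_sigma, HasAntidiagonal.mem_antidiagonal, mem_product, Nat.mem_divisorsAntidiagonal] at h
    obtain ⟨hij, ⟨h1, -⟩, h2, -⟩ := h
    have o1 : Odd (a * x) := ⟨i, h1⟩
    have o2 : Odd (b * y) := ⟨j, h2⟩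
    rw [Nat.odd_mul] at o1 o2
    exact mem_quads.2 ⟨o1.1, o1.2, o2.1, o2.2, by dsimp only; omega⟩
  · rintro ⟨a, x, b, y⟩ h
    obtain ⟨ha, hx, hb, hy, h⟩ := mem_quads.1 h
    obtain ⟨i, hi⟩ := ha.mul hx
    obtain ⟨j, hj⟩ := hb.mul hy
    simp only [mem_sigma, HasAntidiagonal.mem_antidiagonal, mem_product, Nat.mem_divisorsAntidiagonal]
    omega
  · rintro ⟨⟨i, j⟩, ⟨⟨a, x⟩, ⟨b, y⟩⟩⟩ h
    simp only [mem_sigma, HasAntidiagonal.mem_antidiagonal, mem_product, Nat.mem_divisorsAntidiagonal] at h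
    obtain ⟨hij, ⟨h1, -⟩, h2, -⟩ := h
    have e1 : a * x / 2 = i := by omega
    have e2 : b * y / 2 = j := by omega
    simp only [e1, e2]

lemma two_mul_T (x : ℤ) : 2 * T x = x * (x + 1) :=
  Int.mul_ediv_cancel' (Int.even_mul_succ_self x).two_dvd

lemma finite_solutions (n : ℕ) : {q : ℤ × ℤ × ℤ × ℤ |
    T q.1 + T q.2.1 + 3 * T q.2.2.1 + 3 * T q.2.2.2 = (n : ℤ)}.Finite := by
  have hT : ∀ x, 0 ≤ T x := fun x => by
    have := two_mul_T x
    rcases le_or_gt 0 x with h | h <;> nlinarith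
  have hb : ∀ x, T x ≤ n → x ∈ Set.Icc (-(n + 1) : ℤ) (n + 1) := fun x hx => by
    have := two_mul_T x
    constructor <;> nlinarith
  refine ((Set.finite_Icc _ _).prod ((Set.finite_Icc _ _).prod ((Set.finite_Icc _ _).prod
    (Set.finite_Icc _ _)))).subset (s := Set.Icc (-(n + 1) : ℤ) (n + 1) ×ˢ
      Set.Icc (-(n + 1) : ℤ) (n + 1) ×ˢ Set.Icc (-(n + 1) : ℤ) (n + 1) ×ˢ
      Set.Icc (-(n + 1) : ℤ) (n + 1)) ?_
  rintro ⟨x, y, z, w⟩ h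
  simp only [Set.mem_ofPred_eq] at h
  have := hT x
  have := hT y
  have := hT z
  have := hT w
  refine ⟨hb _ ?_, hb _ ?_, hb _ ?_, hb _ ?_⟩ <;> dsimp only <;> omega

/-- Completing the square, `8 T x + 1 = (2 x + 1) ^ 2`, so `T x + 3 T z = i` says that
`(2 x + 1, 2 z + 1)` is an odd representation of `4 (2 i + 1)` by `x ^ 2 + 3 y ^ 2`; a solution of
the quaternary equation arises from each pair of such representations with `i + j = n`. -/
lemma sum_card_le_ncard (n : ℕ) :
    ∑ ij ∈ antidiagonal n, #(oddReps (2 * ij.1 + 1)) * #(oddReps (2 * ij.2 + 1)) ≤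
      Set.ncard {q : ℤ × ℤ × ℤ × ℤ |
        T q.1 + T q.2.1 + 3 * T q.2.2.1 + 3 * T q.2.2.2 = (n : ℤ)} := by
  simp only [← card_product]
  rw [← card_sigma (antidiagonal n)
    (fun ij => oddReps (2 * ij.1 + 1) ×ˢ oddReps (2 * ij.2 + 1)), ← Set.ncard_coe_finset]
  refine Set.ncard_le_ncard_of_injOn
    (fun s => ((s.2.1.1 - 1) / 2, (s.2.2.1 - 1) / 2, (s.2.1.2 - 1) / 2, (s.2.2.2 - 1) / 2))
    ?_ ?_ (finite_solutions n)
  · rintro ⟨⟨i, j⟩, ⟨⟨p, q⟩, ⟨p', q'⟩⟩⟩ h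
    simp only [coe_sigma, Set.mem_sigma_iff, mem_coe, HasAntidiagonal.mem_antidiagonal, mem_product,
      mem_oddReps] at h
    obtain ⟨hij, ⟨⟨x, rfl⟩, ⟨z, rfl⟩, h1⟩, ⟨y, rfl⟩, ⟨w, rfl⟩, h2⟩ := h
    have hh : ∀ t : ℤ, (2 * t + 1 - 1) / 2 = t := fun t => by omega
    simp only [Set.mem_ofPred_eq, hh]
    have := two_mul_T x
    have := two_mul_T y
    have := two_mul_T z
    have := two_mul_T w
    push_cast at h1 h2
    have hij' : (i : ℤ) + j = n := by exact_mod_cast hij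
    linarith
  · rintro ⟨⟨i, j⟩, ⟨⟨p, q⟩, ⟨p', q'⟩⟩⟩ h ⟨⟨k, l⟩, ⟨⟨r, s⟩, ⟨r', s'⟩⟩⟩ h' e
    simp only [coe_sigma, Set.mem_sigma_iff, mem_coe, HasAntidiagonal.mem_antidiagonal, mem_product,
      mem_oddReps] at h h'
    obtain ⟨hij, ⟨⟨x, rfl⟩, ⟨z, rfl⟩, h1⟩, ⟨y, rfl⟩, ⟨w, rfl⟩, h2⟩ := h
    obtain ⟨hkl, ⟨⟨x', rfl⟩, ⟨z', rfl⟩, h1'⟩, ⟨y', rfl⟩, ⟨w', rfl⟩, h2'⟩ := h'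
    have hh : ∀ t : ℤ, (2 * t + 1 - 1) / 2 = t := fun t => by omega
    simp only [hh, Prod.mk.injEq] at e
    obtain ⟨rfl, rfl, rfl, rfl⟩ := e
    obtain rfl : i = k := by omega
    obtain rfl : j = l := by omega
    rfl

theorem rep_count_1133 (n : ℕ) :
    (n + 1) / 3 ^ ((n + 1).factorization 3) ≤
      Set.ncard {q : ℤ × ℤ × ℤ × ℤ |
        T q.1 + T q.2.1 + 3 * T q.2.2.1 + 3 * T q.2.2.2 = (n : ℤ)} := by
  refine le_trans ?_ (sum_card_le_ncard n)
  have h := le_sum_chi_mul_chi n.succ_ne_zero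
  rw [Nat.succ_eq_add_one, ← sum_antidiagonal_chiSum] at h
  have h2 : ∑ ij ∈ antidiagonal n, chiSum (2 * ij.1 + 1) * chiSum (2 * ij.2 + 1) ≤
      ∑ ij ∈ antidiagonal n,
        (#(oddReps (2 * ij.1 + 1)) : ℤ) * #(oddReps (2 * ij.2 + 1)) := by
    refine sum_le_sum fun ij _ => ?_
    have h1 := chiSum_bounds (N := 2 * ij.1 + 1) ⟨_, rfl⟩
    have h2 := chiSum_bounds (N := 2 * ij.2 + 1) ⟨_, rfl⟩
    exact mul_le_mul h1.2 h2.2 h2.1 (h1.1.trans h1.2)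
  exact_mod_cast h.trans h2
end
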